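/- arXiv:1702.06223 — 12 statements merged into one kernel-verified Lean document; each statement's English description precedes it below -/
import Mathlib

section
/- Let q ∈ ℂ be nonzero and not a root of unity (q^n ≠ 1 for every integer n ≥ 1). Let V be a nonzero finite-dimensional complex vector space and let X, Y : V → V be linear maps satisfying X∘Y − q·(Y∘X) = id_V. Assume the representation is irreducible, i.e. the only ℂ-subspaces U ⊆ V with X(U) ⊆ U and Y(U) ⊆ U are 0 and V. Then dim_ℂ V = 1. -/
/-- Every finite-dimensional irreducible representation of the quantized Weyl algebra
`k⟨X,Y⟩/(XY − qYX − 1)` over `ℂ`, with `q` not a root of unity, is one-dimensional. -/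
theorem weyl_algebra_irreducible_one_dimensional
    (q : ℂ) (hq0 : q ≠ 0) (hq : ∀ n : ℕ, 1 ≤ n → q ^ n ≠ 1)
    {V : Type*} [AddCommGroup V] [Module ℂ V] [FiniteDimensional ℂ V] [Nontrivial V]
    (X Y : V →ₗ[ℂ] V)
    (hrel : X ∘ₗ Y - q • (Y ∘ₗ X) = LinearMap.id)
    (hirr : ∀ U : Submodule ℂ V, (∀ v ∈ U, X v ∈ U) → (∀ v ∈ U, Y v ∈ U) →
      U = ⊥ ∨ U = ⊤) :
    Module.finrank ℂ V = 1 := by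
  have r : ∀ v, X (Y v) = q • Y (X v) + v := fun v => by
    have h := LinearMap.congr_fun hrel v
    simp only [LinearMap.sub_apply, LinearMap.comp_apply, LinearMap.smul_apply,
      LinearMap.id_apply] at h
    linear_combination (norm := module) h
  have hq1 : q - 1 ≠ 0 := fun h => hq 1 le_rfl (by simpa using sub_eq_zero.1 h)
  let Z : V →ₗ[ℂ] V := (q - 1) • (Y ∘ₗ X) + LinearMap.id
  have hZ : ∀ v, Z v = (q - 1) • Y (X v) + v := fun v => rfl
  have hXZ : ∀ v, X (Z v) = q • Z (X v) := fun v => by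
    simp only [hZ, map_add, map_smul, r]
    module
  have hZY : ∀ v, Z (Y v) = q • Y (Z v) := fun v => by
    simp only [hZ, map_add, map_smul, r]
    module
  rcases hirr (LinearMap.ker Z)
    (fun v hv => by
      rw [LinearMap.mem_ker] at hv ⊢
      have h := hXZ v
      rw [hv, map_zero] at h
      exact (smul_eq_zero.1 h.symm).resolve_left hq0)
    (fun v hv => by
      rw [LinearMap.mem_ker] at hv ⊢
      rw [hZY, hv, map_zero, smul_zero]) with h | h
  · exfalso
    have hdZ : LinearMap.det Z ≠ 0 := fun h0 => by
      have := LinearMap.bot_lt_ker_of_det_eq_zero h0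
      exact this.ne' h
    have hdX : LinearMap.det X = 0 := by
      have e : X ∘ₗ Z = q • (Z ∘ₗ X) := LinearMap.ext hXZ
      have e2 := congrArg LinearMap.det e
      rw [LinearMap.det_smul, LinearMap.det_comp, LinearMap.det_comp] at e2
      have hn := hq (Module.finrank ℂ V) Module.finrank_pos
      by_contra hX
      apply hn
      have hne := mul_ne_zero hdZ hX
      apply mul_right_cancel₀ hne
      rw [← e2]; ring
    obtain ⟨u, hu, hu0⟩ := (Submodule.ne_bot_iff _).1
      (LinearMap.bot_lt_ker_of_det_eq_zero hdX).ne'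
    rw [LinearMap.mem_ker] at hu
    have hZn : ∀ n : ℕ, Z ((Y ^ n) u) = q ^ n • (Y ^ n) u := fun n => by
      induction n with
      | zero => simp [hZ, hu]
      | succ n ih =>
        rw [pow_succ', Module.End.mul_apply, hZY, ih, map_smul, smul_smul, pow_succ']
    have hYn : ∀ n : ℕ, (Y ^ n) u ≠ 0 := fun n => by
      induction n with
      | zero => simpa using hu0
      | succ n ih =>
        intro h0
        rw [pow_succ', Module.End.mul_apply] at h0
        have h1 := r ((Y ^ n) u)
        have h2 := hZn n
        rw [hZ] at h2
        rw [h0, map_zero] at h1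
        have h3 : (q ^ (n + 1) - 1) • (Y ^ n) u = 0 := by
          linear_combination (norm := module) (-q) • h2 - (q - 1) • h1
        rcases smul_eq_zero.1 h3 with h4 | h4
        · exact hq (n + 1) (by omega) (sub_eq_zero.1 h4)
        · exact ih h4
    have hinj : Function.Injective (fun n : ℕ => q ^ n) := by
      have key : ∀ m n : ℕ, m < n → q ^ m ≠ q ^ n := fun m n hmn he => by
        apply hq (n - m) (by omega)
        apply mul_left_cancel₀ (pow_ne_zero m hq0)
        rw [← pow_add, Nat.add_sub_cancel' hmn.le, mul_one, he]
      intro m n he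
      rcases lt_trichotomy m n with h | h | h
      · exact (key m n h he).elim
      · exact h
      · exact (key n m h he.symm).elim
    have hfin := Module.End.finite_hasEigenvalue Z
    refine (Set.infinite_range_of_injective hinj) (hfin.subset ?_)
    rintro _ ⟨n, rfl⟩
    exact Module.End.hasEigenvalue_of_hasEigenvector
      (x := (Y ^ n) u) ⟨Module.End.mem_eigenspace_iff.2 (hZn n), hYn n⟩
  · have hc : ∀ v, X (Y v) = Y (X v) := fun v => by
      have hv : Z v = 0 := by
        have : v ∈ LinearMap.ker Z := h ▸ Submodule.mem_top
        exact this
      rw [hZ] at hv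
      rw [r]
      linear_combination (norm := module) hv
    have scal : ∀ T : V →ₗ[ℂ] V, (∀ v, T (X v) = X (T v)) → (∀ v, T (Y v) = Y (T v)) →
        ∃ c : ℂ, ∀ v, T v = c • v := fun T hTX hTY => by
      obtain ⟨c, hcT⟩ := Module.End.exists_eigenvalue T
      refine ⟨c, fun v => ?_⟩
      rcases hirr (Module.End.eigenspace T c)
        (fun v hv => by
          rw [Module.End.mem_eigenspace_iff] at hv ⊢
          rw [hTX, hv, map_smul])
        (fun v hv => by
          rw [Module.End.mem_eigenspace_iff] at hv ⊢
          rw [hTY, hv, map_smul]) with h | h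
      · exact (hcT h).elim
      · exact Module.End.mem_eigenspace_iff.1 (h ▸ Submodule.mem_top)
    obtain ⟨a, ha⟩ := scal X (fun _ => rfl) hc
    obtain ⟨b, hb⟩ := scal Y (fun v => (hc v).symm) (fun _ => rfl)
    obtain ⟨u, hu⟩ := exists_ne (0 : V)
    rcases hirr (Submodule.span ℂ {u})
      (fun v hv => by rw [ha]; exact Submodule.smul_mem _ _ hv)
      (fun v hv => by rw [hb]; exact Submodule.smul_mem _ _ hv) with h | h
    · exact (hu (Submodule.span_singleton_eq_bot.1 h)).elim
    · rw [← finrank_top, ← h, finrank_span_singleton hu]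
end

section
/- Let q ∈ ℂ be nonzero and not a root of unity (q^n ≠ 1 for every integer n ≥ 1). Let V be a nonzero finite-dimensional complex vector space and let X, Y : V → V be linear maps satisfying X∘Y − q·(Y∘X) = id_V, such that the only ℂ-subspaces U ⊆ V with X(U) ⊆ U and Y(U) ⊆ U are 0 and V. Then Y∘X = (1/(1−q))·id_V and X∘Y = (1/(1−q))·id_V; in particular X and Y commute. -/
lemma weyl_aux {V : Type*} [AddCommGroup V] [Module ℂ V] [FiniteDimensional ℂ V]
    (c : ℂ) (hc0 : c ≠ 0) (hc : ∀ n : ℕ, 1 ≤ n → c ^ n ≠ 1) (A Z : V →ₗ[ℂ] V)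
    (hZA : ∀ v, Z (A v) = c • A (Z v)) (l : ℂ) (hl : l ≠ 0) (v : V) (hv : v ≠ 0)
    (hZ : Z v = l • v) :
    ∃ (n : ℕ) (u : V), u ≠ 0 ∧ A u = 0 ∧ Z u = (c ^ n * l) • u := by
  by_contra hcon
  push Not at hcon
  have key : ∀ n : ℕ, ∃ u : V, u ≠ 0 ∧ Z u = (c ^ n * l) • u := by
    intro n
    induction n with
    | zero => exact ⟨v, hv, by simpa using hZ⟩
    | succ n ih =>
      obtain ⟨u, hu, hZu⟩ := ih
      refine ⟨A u, fun h => hcon n u hu h hZu, ?_⟩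
      rw [hZA, hZu, map_smul, smul_smul]
      congr 1
      ring
  have hev : ∀ n : ℕ, Module.End.HasEigenvalue Z (c ^ n * l) := by
    intro n
    obtain ⟨u, hu, hZu⟩ := key n
    exact Module.End.hasEigenvalue_of_hasEigenvector
      ⟨Module.End.mem_eigenspace_iff.mpr hZu, hu⟩
  have hlt : ∀ m n : ℕ, m < n → c ^ m * l ≠ c ^ n * l := by
    intro m n hmn h
    have h1 := mul_right_cancel₀ hl h
    obtain ⟨k, rfl⟩ := Nat.exists_eq_add_of_lt hmn
    apply hc (k + 1) (by omega)
    have h2 : c ^ m * c ^ (k + 1) = c ^ m * 1 := by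
      rw [mul_one, ← pow_add, h1, add_assoc]
    exact mul_left_cancel₀ (pow_ne_zero m hc0) h2
  have hinj : Function.Injective
      (fun n : ℕ => (⟨c ^ n * l, hev n⟩ : Module.End.Eigenvalues Z)) := by
    intro m n h
    have h' : c ^ m * l = c ^ n * l := congrArg Subtype.val h
    rcases lt_trichotomy m n with h1 | h1 | h1
    · exact absurd h' (hlt m n h1)
    · exact h1
    · exact absurd h'.symm (hlt n m h1)
  have hfin : Finite (Module.End.Eigenvalues Z) := inferInstance
  exact (@Finite.of_injective _ _ hfin _ hinj).false

/-- On a finite-dimensional irreducible representation of the quantized Weyl algebra,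
with `q` not a root of unity, the element `T = YX` acts as the scalar `1/(1−q)`,
and so does `XY`; in particular `X` and `Y` commute. -/
theorem weyl_algebra_irreducible_scalar_action
    (q : ℂ) (hq0 : q ≠ 0) (hq : ∀ n : ℕ, 1 ≤ n → q ^ n ≠ 1)
    {V : Type*} [AddCommGroup V] [Module ℂ V] [FiniteDimensional ℂ V] [Nontrivial V]
    (X Y : V →ₗ[ℂ] V)
    (hrel : X ∘ₗ Y - q • (Y ∘ₗ X) = LinearMap.id)
    (hirr : ∀ U : Submodule ℂ V, (∀ v ∈ U, X v ∈ U) → (∀ v ∈ U, Y v ∈ U) →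
      U = ⊥ ∨ U = ⊤) :
    Y ∘ₗ X = (1 / (1 - q)) • (LinearMap.id : V →ₗ[ℂ] V) ∧
    X ∘ₗ Y = (1 / (1 - q)) • (LinearMap.id : V →ₗ[ℂ] V) ∧
    X ∘ₗ Y = Y ∘ₗ X := by
  have hq1 : q ≠ 1 := by simpa using hq 1 le_rfl
  have hq1' : 1 - q ≠ 0 := sub_ne_zero.mpr hq1.symm
  have hXY : ∀ v, X (Y v) = v + q • Y (X v) := by
    intro v
    have := LinearMap.congr_fun hrel v
    simp only [LinearMap.sub_apply, LinearMap.comp_apply, LinearMap.smul_apply,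
      LinearMap.id_apply] at this
    exact sub_eq_iff_eq_add.mp this
  let Z : V →ₗ[ℂ] V := LinearMap.id + (q - 1) • (Y ∘ₗ X)
  have hZ : ∀ v, Z v = v + (q - 1) • Y (X v) := fun v => rfl
  have hZY : ∀ v, Z (Y v) = q • Y (Z v) := by
    intro v
    simp only [hZ, hXY, map_add, map_smul]
    module
  have hXZ : ∀ v, X (Z v) = q • Z (X v) := by
    intro v
    simp only [hZ, hXY, map_add, map_smul]
    module
  have hZX : ∀ v, Z (X v) = q⁻¹ • X (Z v) := by
    intro v
    rw [hXZ, smul_smul, inv_mul_cancel₀ hq0, one_smul]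
  rcases hirr (LinearMap.ker Z)
    (fun v hv => by
      rw [LinearMap.mem_ker] at hv ⊢
      rw [hZX, hv, map_zero, smul_zero])
    (fun v hv => by
      rw [LinearMap.mem_ker] at hv ⊢
      rw [hZY, hv, map_zero, smul_zero]) with h | h
  · exfalso
    obtain ⟨l, hl⟩ := Module.End.exists_eigenvalue Z
    obtain ⟨v, hv⟩ := hl.exists_hasEigenvector
    have hv0 : v ≠ 0 := hv.2
    have hZv : Z v = l • v := hv.apply_eq_smul
    have hl0 : l ≠ 0 := by
      rintro rfl
      rw [zero_smul] at hZv
      have : v ∈ LinearMap.ker Z := hZv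
      rw [h] at this
      exact hv0 (by simpa using this)
    obtain ⟨-, w, hw0, hXw, -⟩ := weyl_aux q⁻¹ (inv_ne_zero hq0)
      (fun n hn h => hq n hn (by simpa using h)) X Z hZX l hl0 v hv0 hZv
    obtain ⟨n, u, hu0, hYu, hZu⟩ := weyl_aux q hq0 hq Y Z hZY 1 one_ne_zero w hw0
      (by simp [hZ, hXw])
    have h1 := hXY u
    rw [hYu, map_zero] at h1
    have h2 : (q ^ (n + 1) - 1) • u = 0 := by
      have h3 : (q ^ (n + 1) - 1) • u = q • ((q ^ n * 1) • u) - u := by module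
      rw [h3, ← hZu, hZ]
      have h4 : q • (u + (q - 1) • Y (X u)) - u = (q - 1) • (u + q • Y (X u)) := by module
      rw [h4, ← h1, smul_zero]
    rcases smul_eq_zero.mp h2 with h3 | h3
    · exact hq (n + 1) (by omega) (sub_eq_zero.mp h3)
    · exact hu0 h3
  · have hYX : ∀ v, Y (X v) = (1 / (1 - q)) • v := by
      intro v
      have hv : Z v = 0 := by
        have : v ∈ LinearMap.ker Z := by rw [h]; trivial
        exact this
      rw [hZ] at hv
      have h5 : v = (1 - q) • Y (X v) := by
        rw [← sub_eq_zero, ← hv]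
        module
      conv_rhs => rw [h5]
      rw [smul_smul, one_div, inv_mul_cancel₀ hq1', one_smul]
    have hXY' : ∀ v, X (Y v) = (1 / (1 - q)) • v := by
      intro v
      rw [hXY, hYX]
      have : (1 / (1 - q)) = 1 + q * (1 / (1 - q)) := by
        field_simp
        ring
      conv_rhs => rw [this]
      module
    refine ⟨?_, ?_, ?_⟩
    · ext v
      simpa using hYX v
    · ext v
      simpa using hXY' v
    · ext v
      simp only [LinearMap.comp_apply, hXY', hYX]
end

section
/- For all λ, λ' ∈ ℂ the following q²-commutator identity holds in A: (E·K' + λ·K')·(F + λ'·K') − q²·(F + λ'·K')·(E·K' + λ·K') = (q²/(q − q⁻¹))·(1 − K'²) + (1 − q²)·λ·λ'·K'². -/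
/-- The q²-commutator identity for character-shifted generators in `U_q(sl₂)`:
`[E·K' + λ·K', F + λ'·K']_{q²} = (q²/(q−q⁻¹))·(1 − K'²) + (1−q²)·λ·λ'·K'²`. -/
theorem uqsl2_shifted_commutator
    (q : ℂ) (hq0 : q ≠ 0) (hq1 : q ^ 2 ≠ 1)
    {A : Type*} [Ring A] [Algebra ℂ A]
    (E F K K' : A)
    (hKK' : K * K' = 1) (hK'K : K' * K = 1)
    (hKE : K * E = (q ^ 2) • (E * K))
    (hKF : K * F = (q ^ 2)⁻¹ • (F * K))
    (hEF : E * F - F * E = (q - q⁻¹)⁻¹ • (K - K'))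
    (lam lam' : ℂ) :
    (E * K' + lam • K') * (F + lam' • K')
      - (q ^ 2) • ((F + lam' • K') * (E * K' + lam • K'))
      = (q ^ 2 / (q - q⁻¹)) • (1 - K' ^ 2) + ((1 - q ^ 2) * lam * lam') • K' ^ 2 := by
  have hq2 : q ^ 2 ≠ 0 := pow_ne_zero 2 hq0
  have h1 : E * K' = (q ^ 2) • (K' * E) := by
    calc E * K' = K' * (K * E) * K' := by rw [← mul_assoc, hK'K, one_mul]
      _ = (q ^ 2) • (K' * E * (K * K')) := by
        rw [hKE]; simp only [mul_smul_comm, smul_mul_assoc, mul_assoc]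
      _ = _ := by rw [hKK', mul_one]
  have h2 : F * K' = (q ^ 2)⁻¹ • (K' * F) := by
    calc F * K' = K' * (K * F) * K' := by rw [← mul_assoc, hK'K, one_mul]
      _ = (q ^ 2)⁻¹ • (K' * F * (K * K')) := by
        rw [hKF]; simp only [mul_smul_comm, smul_mul_assoc, mul_assoc]
      _ = _ := by rw [hKK', mul_one]
  have h3 : K' * F = (q ^ 2) • (F * K') := by
    rw [h2, smul_smul, mul_inv_cancel₀ hq2, one_smul]
  have h4 : (q ^ 2) • (E * F * K' - F * E * K') = (q ^ 2 / (q - q⁻¹)) • (1 - K' ^ 2) := by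
    rw [← sub_mul, hEF, smul_mul_assoc, sub_mul, hKK', smul_smul, pow_two K', div_eq_mul_inv]
  have h5 : E * K' * F = (q ^ 2) • (E * F * K') := by
    rw [mul_assoc, h3, mul_smul_comm, mul_assoc]
  have h6 : E * K' * K' = (q ^ 2) • (K' * (E * K')) := by
    conv_lhs => rw [h1]
    rw [smul_mul_assoc, mul_assoc]
  rw [← h4]
  simp only [add_mul, mul_add, smul_mul_assoc, mul_smul_comm]
  rw [h5, h6, h3, pow_two K', ← mul_assoc F E K']
  module
end

section
/- Let λ, λ' ∈ ℂ with λ·λ' ≠ q²/((1 − q²)(q − q⁻¹)). Then K'² lies in the ℂ-subalgebra of A generated by the two character-shifted elements E·K' + λ·K' and F + λ'·K'. -/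
/-- If `λ·λ' ≠ q²/((1−q²)(q−q⁻¹))`, then `K'²` lies in the subalgebra generated by the
character-shifted elements `E·K' + λ·K'` and `F + λ'·K'`. -/
theorem uqsl2_Ksq_mem_adjoin
    (q : ℂ) (hq0 : q ≠ 0) (hq1 : q ^ 2 ≠ 1)
    {A : Type*} [Ring A] [Algebra ℂ A]
    (E F K K' : A)
    (hKK' : K * K' = 1) (hK'K : K' * K = 1)
    (hKE : K * E = (q ^ 2) • (E * K))
    (hKF : K * F = (q ^ 2)⁻¹ • (F * K))
    (hEF : E * F - F * E = (q - q⁻¹)⁻¹ • (K - K'))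
    (lam lam' : ℂ)
    (hll : lam * lam' ≠ q ^ 2 / ((1 - q ^ 2) * (q - q⁻¹))) :
    K' ^ 2 ∈ Algebra.adjoin ℂ ({E * K' + lam • K', F + lam' • K'} : Set A) := by
  have hq2 : q ^ 2 ≠ 0 := pow_ne_zero 2 hq0
  have h1 : (1 : ℂ) - q ^ 2 ≠ 0 := sub_ne_zero.mpr (Ne.symm hq1)
  have hc : q - q⁻¹ ≠ 0 := by
    intro h
    apply hq1
    have h2 : q = q⁻¹ := sub_eq_zero.mp h
    calc q ^ 2 = q * q := sq q
      _ = q * q⁻¹ := by rw [← h2]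
      _ = 1 := mul_inv_cancel₀ hq0
  have hs : lam * lam' * (1 - q ^ 2) - q ^ 2 * (q - q⁻¹)⁻¹ ≠ 0 := by
    intro h
    apply hll
    rw [eq_div_iff (mul_ne_zero h1 hc), ← mul_assoc, sub_eq_zero.mp h, mul_assoc,
      inv_mul_cancel₀ hc, mul_one]
  -- commutation with the inverse `K'`
  have hEK : E * K' = (q ^ 2) • (K' * E) := by
    calc E * K' = K' * (K * E) * K' := by rw [← mul_assoc K', hK'K, one_mul]
      _ = (q ^ 2) • (K' * E * (K * K')) := by
        rw [hKE]; simp only [mul_smul_comm, smul_mul_assoc, mul_assoc]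
      _ = _ := by rw [hKK', mul_one]
  have hFK : F * K' = (q ^ 2)⁻¹ • (K' * F) := by
    calc F * K' = K' * (K * F) * K' := by rw [← mul_assoc K', hK'K, one_mul]
      _ = (q ^ 2)⁻¹ • (K' * F * (K * K')) := by
        rw [hKF]; simp only [mul_smul_comm, smul_mul_assoc, mul_assoc]
      _ = _ := by rw [hKK', mul_one]
  have hKF' : K' * F = (q ^ 2) • (F * K') := by
    rw [hFK, smul_smul, mul_inv_cancel₀ hq2, one_smul]
  have hEFK : E * F * K' - F * E * K' = (q - q⁻¹)⁻¹ • (1 - K' * K') := by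
    rw [← sub_mul, hEF, smul_mul_assoc, sub_mul, hKK']
  have e1 : E * K' * F = (q ^ 2) • (E * F * K') := by
    rw [mul_assoc, hKF', mul_smul_comm, mul_assoc]
  have e2 : E * K' * K' = (q ^ 2) • (K' * (E * K')) := by
    conv_lhs => rw [hEK]
    rw [smul_mul_assoc, mul_assoc]
  have key : (E * K' + lam • K') * (F + lam' • K')
      - (q ^ 2) • ((F + lam' • K') * (E * K' + lam • K'))
      - (q ^ 2 * (q - q⁻¹)⁻¹) • (1 : A)
      = (lam * lam' * (1 - q ^ 2) - q ^ 2 * (q - q⁻¹)⁻¹) • K' ^ 2 := by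
    have e3 : E * F * K' = F * (E * K') + (q - q⁻¹)⁻¹ • (1 - K' * K') := by
      rw [← hEFK, mul_assoc F]; abel
    simp only [add_mul, mul_add, smul_mul_assoc, mul_smul_comm]
    rw [e1, e2, e3, hKF', sq K']
    module
  set S := Algebra.adjoin ℂ ({E * K' + lam • K', F + lam' • K'} : Set A) with hS
  have hX : E * K' + lam • K' ∈ S := Algebra.subset_adjoin (by simp)
  have hY : F + lam' • K' ∈ S := Algebra.subset_adjoin (by simp)
  have hm := S.sub_mem (S.sub_mem (S.mul_mem hX hY) (S.smul_mem (S.mul_mem hY hX) (q ^ 2)))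
    (S.smul_mem S.one_mem (q ^ 2 * (q - q⁻¹)⁻¹))
  rw [key] at hm
  have hf := S.smul_mem hm (lam * lam' * (1 - q ^ 2) - q ^ 2 * (q - q⁻¹)⁻¹)⁻¹
  rwa [smul_smul, inv_mul_cancel₀ hs, one_smul] at hf
end

section
/- Let λ, λ' ∈ ℂ with λ·λ' = q²/((1 − q²)(q − q⁻¹)). Then the character-shifted elements satisfy the quantized Weyl algebra relation: (E·K' + λ·K')·(F + λ'·K') − q²·(F + λ'·K')·(E·K' + λ·K') = (q²/(q − q⁻¹))·1. -/
/-- If `λ·λ' = q²/((1−q²)(q−q⁻¹))`, then the character-shifted elements satisfy the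
quantized Weyl algebra relation. -/
theorem uqsl2_shifted_weyl_relation
    (q : ℂ) (hq0 : q ≠ 0) (hq1 : q ^ 2 ≠ 1)
    {A : Type*} [Ring A] [Algebra ℂ A]
    (E F K K' : A)
    (hKK' : K * K' = 1) (hK'K : K' * K = 1)
    (hKE : K * E = (q ^ 2) • (E * K))
    (hKF : K * F = (q ^ 2)⁻¹ • (F * K))
    (hEF : E * F - F * E = (q - q⁻¹)⁻¹ • (K - K'))
    (lam lam' : ℂ)
    (hll : lam * lam' = q ^ 2 / ((1 - q ^ 2) * (q - q⁻¹))) :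
    (E * K' + lam • K') * (F + lam' • K')
      - (q ^ 2) • ((F + lam' • K') * (E * K' + lam • K'))
      = (q ^ 2 / (q - q⁻¹)) • (1 : A) := by
  have hq2 : q ^ 2 ≠ 0 := pow_ne_zero 2 hq0
  have h1 : 1 - q ^ 2 ≠ 0 := fun h => hq1 (sub_eq_zero.mp h).symm
  have hFK : F * K = (q ^ 2) • (K * F) := by
    rw [hKF, smul_smul, mul_inv_cancel₀ hq2, one_smul]
  have hF : K' * F = (q ^ 2) • (F * K') := by
    calc K' * F = K' * (F * K) * K' := by
          rw [mul_assoc, mul_assoc, hKK', mul_one]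
      _ = (q ^ 2) • (F * K') := by
          rw [hFK, mul_smul_comm, smul_mul_assoc, ← mul_assoc, hK'K, one_mul]
  have hE : (q ^ 2) • (K' * E) = E * K' := by
    calc (q ^ 2) • (K' * E) = K' * ((q ^ 2) • (E * K)) * K' := by
          rw [mul_smul_comm, smul_mul_assoc, mul_assoc, mul_assoc, hKK', mul_one]
      _ = E * K' := by
          rw [← hKE, ← mul_assoc, hK'K, one_mul]
  have e1 : E * K' * F = (q ^ 2) • (E * F * K') := by
    rw [mul_assoc, hF, mul_smul_comm, mul_assoc]
  have e2 : (q ^ 2) • (K' * (E * K')) = E * K' * K' := by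
    rw [← mul_assoc, ← smul_mul_assoc, hE]
  have e3 : E * F * K' = F * (E * K') + (q - q⁻¹)⁻¹ • (1 - K' * K') := by
    have h := congrArg (· * K') hEF
    simp only [sub_mul, smul_mul_assoc, hKK'] at h
    rw [← mul_assoc F, ← h]
    abel
  have hc : lam * lam' * (1 - q ^ 2) = q ^ 2 * (q - q⁻¹)⁻¹ := by
    rw [hll, div_eq_mul_inv, mul_inv]
    field_simp
  have e4 : (q ^ 2) • (lam' • (K' * (E * K'))) = lam' • (E * K' * K') := by
    rw [smul_comm, e2]
  simp only [add_mul, mul_add, smul_add, smul_mul_assoc, mul_smul_comm]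
  rw [e4, e1, e3, hF, div_eq_mul_inv]
  have e5 : (lam * lam' * (1 - q ^ 2)) • (K' * K') = (q ^ 2 * (q - q⁻¹)⁻¹) • (K' * K') := by
    rw [hc]
  generalize (q - q⁻¹)⁻¹ = c at *
  rw [← sub_eq_zero] at e5 ⊢
  rw [← e5]
  module
end

section
/- Let A be an associative unital ℂ-algebra and Z ⊆ A a generating set (the ℂ-subalgebra generated by Z is all of A). Let X, K ∈ A be such that: (i) for every Y ∈ Z there exists a nonzero constant c ∈ ℂ with X·Y = c·(Y·X); (ii) there is a constant c' ∈ ℂ which is not a root of unity (c'^n ≠ 1 for all integers n ≥ 1) with K·X = c'·(X·K). Let V be a finite-dimensional (over ℂ) simple A-module such that K has an eigenvector with nonzero eigenvalue on V, i.e. there exist 0 ≠ v ∈ V and μ ∈ ℂ, μ ≠ 0, with K·v = μ·v. Then X·v = 0 for every v ∈ V. -/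
/-- If `X` q-commutes with all generators of `A`, and `K·X = c'·X·K` for `c'` not a root
of unity, and `K` has an eigenvector with nonzero eigenvalue on a finite-dimensional
simple `A`-module `V`, then `X` acts as zero on `V`. -/
theorem qcommuting_element_acts_trivially
    {A : Type*} [Ring A] [Algebra ℂ A]
    (Z : Set A) (hZ : Algebra.adjoin ℂ Z = ⊤)
    (X K : A)
    (hX : ∀ Y ∈ Z, ∃ c : ℂ, c ≠ 0 ∧ X * Y = c • (Y * X))
    (c' : ℂ) (hc' : ∀ n : ℕ, 1 ≤ n → c' ^ n ≠ 1)
    (hK : K * X = c' • (X * K))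
    (V : Type*) [AddCommGroup V] [Module ℂ V] [Module A V]
    [IsScalarTower ℂ A V] [FiniteDimensional ℂ V] [IsSimpleModule A V]
    (v₀ : V) (hv₀ : v₀ ≠ 0) (μ : ℂ) (hμ : μ ≠ 0) (hKv : K • v₀ = μ • v₀) :
    ∀ v : V, X • v = 0 := by
  have hinv : ∀ a : A, ∀ w : V, X • w = 0 → X • (a • w) = 0 := by
    intro a
    have ha : a ∈ Algebra.adjoin ℂ Z := by rw [hZ]; trivial
    induction ha using Algebra.adjoin_induction with
    | mem Y hY =>
      intro w hw
      obtain ⟨c, -, hc⟩ := hX Y hY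
      rw [← mul_smul, hc, smul_assoc, mul_smul, hw, smul_zero, smul_zero]
    | algebraMap r =>
      intro w hw
      rw [← mul_smul, ← Algebra.commutes, mul_smul, hw, smul_zero]
    | add a b _ _ iha ihb =>
      intro w hw
      rw [add_smul, smul_add, iha w hw, ihb w hw, add_zero]
    | mul a b _ _ iha ihb =>
      intro w hw
      rw [mul_smul]
      exact iha _ (ihb w hw)
  let N : Submodule A V :=
    { carrier := {w | X • w = 0}
      add_mem' := by
        intro a b ha hb
        simp only [Set.mem_ofPred_eq] at *
        rw [smul_add, ha, hb, add_zero]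
      zero_mem' := smul_zero X
      smul_mem' := fun a w hw => hinv a w hw }
  have hmem : ∀ w, w ∈ N ↔ X • w = 0 := fun w => Iff.rfl
  rcases eq_bot_or_eq_top N with hN | hN
  swap
  · intro v
    rw [← hmem, hN]
    trivial
  exfalso
  have hker : ∀ w : V, X • w = 0 → w = 0 := by
    intro w hw
    rw [← hmem, hN] at hw
    simpa using hw
  let x : V →ₗ[ℂ] V := Algebra.lsmul ℂ ℂ V X
  let k : Module.End ℂ V := Algebra.lsmul ℂ ℂ V K
  have hx : ∀ w, x w = X • w := fun w => rfl
  have hk : ∀ w, k w = K • w := fun w => rfl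
  have hkx : ∀ w : V, K • (X • w) = c' • (X • (K • w)) := by
    intro w
    rw [← mul_smul, hK, smul_assoc, mul_smul]
  by_cases h0 : c' = 0
  · have hinj : Function.Injective x := by
      rw [← LinearMap.ker_eq_bot, LinearMap.ker_eq_bot']
      exact hker
    obtain ⟨u, hu⟩ := LinearMap.injective_iff_surjective.mp hinj v₀
    have h1 := hkx u
    rw [← hx, hu, hKv, h0, zero_smul] at h1
    exact (smul_ne_zero hμ hv₀) h1
  · have hev : ∀ n : ℕ, k.HasEigenvalue (c' ^ n * μ) := by
      have key : ∀ n : ℕ, ∃ w : V, w ≠ 0 ∧ K • w = (c' ^ n * μ) • w := by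
        intro n
        induction n with
        | zero => exact ⟨v₀, hv₀, by simpa using hKv⟩
        | succ n ih =>
          obtain ⟨w, hw, hw'⟩ := ih
          refine ⟨X • w, fun h => hw (hker w h), ?_⟩
          rw [hkx, hw', smul_comm X, smul_smul]
          congr 1
          ring
      intro n
      obtain ⟨w, hw, hw'⟩ := key n
      exact Module.End.hasEigenvalue_of_hasEigenvector
        ⟨Module.End.mem_eigenspace_iff.mpr hw', hw⟩
    have hlt : ∀ m n : ℕ, m < n → c' ^ m ≠ c' ^ n := by
      intro m n hmn h
      apply hc' (n - m) (by omega)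
      have h2 : c' ^ n = c' ^ m * c' ^ (n - m) := by
        rw [← pow_add]; congr 1; omega
      rw [h2] at h
      exact (mul_eq_left₀ (pow_ne_zero m h0)).mp h.symm
    have hinj : Function.Injective (fun n : ℕ => c' ^ n * μ) := by
      intro m n h
      have h' : c' ^ m = c' ^ n := mul_right_cancel₀ hμ h
      rcases lt_trichotomy m n with h1 | h1 | h1
      · exact absurd h' (hlt _ _ h1)
      · exact h1
      · exact absurd h'.symm (hlt _ _ h1)
    have hinj2 : Function.Injective
        (fun n : ℕ => (⟨c' ^ n * μ, hev n⟩ : Module.End.Eigenvalues k)) := by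
      intro m n h
      exact hinj (congrArg Subtype.val h)
    haveI : Finite (Module.End.Eigenvalues k) := inferInstance
    exact not_injective_infinite_finite (β := Module.End.Eigenvalues k) _ hinj2
end

section
/- Let w₁, w₂ ∈ S_m and set B := N(w₁) ∩ N(w₂). Assume B is pairwise orthogonal. Then either there exists k with (k, k+1) ∈ N(w₁) and (k, k+1) ∉ B, or the number of pairs of the form (k, k+1) in N(w₁) equals the cardinality of B. -/
/-- The inversion set `N(w) = {(i,j) | i < j, w⁻¹(i) > w⁻¹(j)}` of a permutation,
realizing `Φ⁺(w)` in type `A_{m−1}`. -/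
def invSet (m : ℕ) (w : Equiv.Perm (Fin m)) : Finset (Fin m × Fin m) :=
  Finset.univ.filter (fun p => p.1 < p.2 ∧ w⁻¹ p.2 < w⁻¹ p.1)

/-- A pair `(k, k+1)`, corresponding to a simple root. -/
def IsSimplePair {m : ℕ} (p : Fin m × Fin m) : Prop :=
  (p.1 : ℕ) + 1 = (p.2 : ℕ)

instance {m : ℕ} : DecidablePred (IsSimplePair (m := m)) :=
  fun p => inferInstanceAs (Decidable ((p.1 : ℕ) + 1 = (p.2 : ℕ)))

/-- Orthogonality of the roots `e_i − e_j` and `e_k − e_l`: `{i,j} ∩ {k,l} = ∅`. -/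
def OrthPair {m : ℕ} (p q : Fin m × Fin m) : Prop :=
  p.1 ≠ q.1 ∧ p.1 ≠ q.2 ∧ p.2 ≠ q.1 ∧ p.2 ≠ q.2

/-- A set of pairs is pairwise orthogonal. -/
def PairwiseOrth {m : ℕ} (B : Finset (Fin m × Fin m)) : Prop :=
  ∀ p ∈ B, ∀ q ∈ B, p ≠ q → OrthPair p q

theorem simple_of_mem_aux {m : ℕ} (u v : Fin m → Fin m) (hu : Function.Injective u)
    (hs : ∀ a b : Fin m, (a : ℕ) + 1 = b → u b < u a → v b < v a)
    (i j : Fin m) (hij : i < j) (hui : u j < u i) (hvi : v j < v i)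
    (hl : ∀ k, i < k → k ≠ j → ¬ (u k < u i ∧ v k < v i))
    (hr : ∀ k, k < j → k ≠ i → ¬ (u j < u k ∧ v j < v k)) :
    (i : ℕ) + 1 = j := by
  by_contra hne
  have key : ∀ n : ℕ, (i : ℕ) + 1 ≤ n → ∀ h : n < j, u i < u ⟨n, h.trans j.2⟩ := by
    intro n hn
    induction n, hn using Nat.le_induction with
    | base =>
      intro h
      by_contra hc
      have hlt : u ⟨i + 1, h.trans j.2⟩ < u i := lt_of_le_of_ne (not_lt.mp hc) (fun e => by
        have := congrArg Fin.val (hu e)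
        simp at this)
      exact hl _ (by simp [Fin.lt_def]) (by simp [Fin.ext_iff]; omega) ⟨hlt, hs _ _ rfl hlt⟩
    | succ n hn ih =>
      intro h
      have h0 : n < (j : ℕ) := by omega
      have ih := ih h0
      by_contra hc
      have hlt : u ⟨n + 1, h.trans j.2⟩ < u i := lt_of_le_of_ne (not_lt.mp hc) (fun e => by
        have := congrArg Fin.val (hu e)
        simp at this
        omega)
      have h1 := hs ⟨n, h0.trans j.2⟩ ⟨n + 1, h.trans j.2⟩ rfl (hlt.trans ih)
      have h2 : v ⟨n, h0.trans j.2⟩ ≤ v j := by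
        by_contra h3
        exact hr _ (by simpa [Fin.lt_def] using h0) (by simp [Fin.ext_iff]; omega)
          ⟨hui.trans ih, not_le.mp h3⟩
      exact hl _ (by simp [Fin.lt_def]; omega) (by simp [Fin.ext_iff]; omega)
        ⟨hlt, (h1.trans_le h2).trans hvi⟩
  have hij' : (i : ℕ) < j := hij
  have hj : (j : ℕ) - 1 < j := by omega
  have h1 := hui.trans (key (j - 1) (by omega) hj)
  exact hr _ (by simpa [Fin.lt_def] using hj) (by simp [Fin.ext_iff]; omega)
    ⟨h1, hs _ _ (by simp; omega) h1⟩

/-- If `B = N(w₁) ∩ N(w₂)` is pairwise orthogonal, then either `N(w₁)` contains a simple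
pair outside `B`, or the number of simple pairs in `N(w₁)` equals `|B|`. -/
theorem simple_outside_or_count {m : ℕ} (w₁ w₂ : Equiv.Perm (Fin m))
    (B : Finset (Fin m × Fin m)) (hB : B = invSet m w₁ ∩ invSet m w₂)
    (horth : PairwiseOrth B) :
    (∃ q ∈ invSet m w₁, IsSimplePair q ∧ q ∉ B) ∨
      ((invSet m w₁).filter IsSimplePair).card = B.card := by
  rw [or_iff_not_imp_left]
  intro hno
  push Not at hno
  have hmem : ∀ a b : Fin m, (a, b) ∈ B ↔
      a < b ∧ w₁⁻¹ b < w₁⁻¹ a ∧ w₂⁻¹ b < w₂⁻¹ a := by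
    intro a b
    rw [hB]
    simp only [invSet, Finset.mem_inter, Finset.mem_filter, Finset.mem_univ, true_and]
    tauto
  congr 1
  ext ⟨i, j⟩
  rw [Finset.mem_filter]
  constructor
  · rintro ⟨h1, h2⟩
    exact hno _ h1 h2
  · intro h
    refine ⟨?_, ?_⟩
    · rw [hB] at h
      exact (Finset.mem_inter.mp h).1
    obtain ⟨hij, hui, hvi⟩ := (hmem i j).1 h
    refine simple_of_mem_aux (fun x => w₁⁻¹ x) (fun x => w₂⁻¹ x) (w₁⁻¹).injective
      ?_ i j hij hui hvi ?_ ?_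
    · intro a b hab hlt
      have hlt' : a < b := by rw [Fin.lt_def]; omega
      have := hno (a, b) (by simp only [invSet, Finset.mem_filter, Finset.mem_univ, true_and]
                             exact ⟨hlt', hlt⟩) hab
      exact ((hmem a b).1 this).2.2
    · rintro k hk hkj ⟨h1, h2⟩
      exact (horth _ h _ ((hmem i k).2 ⟨hk, h1, h2⟩)
        (fun e => hkj (congrArg Prod.snd e).symm)).1 rfl
    · rintro k hk hki ⟨h1, h2⟩
      exact (horth _ h _ ((hmem k j).2 ⟨hk, h1, h2⟩)
        (fun e => hki (congrArg Prod.fst e).symm)).2.2.2 rfl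
end

section
/- Let w₁, w₂ ∈ S_m and set B := N(w₁) ∩ N(w₂). Assume B is pairwise orthogonal and assume that every pair of the form (k, k+1) occurring in N(w₁) belongs to B. Then every element of B is of the form (k, k+1), i.e. B consists only of simple roots. -/
/-- If `B = N(w₁) ∩ N(w₂)` is pairwise orthogonal and every simple pair of `N(w₁)` lies
in `B`, then `B` consists only of simple pairs. -/
theorem B_subset_simple {m : ℕ} (w₁ w₂ : Equiv.Perm (Fin m))
    (B : Finset (Fin m × Fin m)) (hB : B = invSet m w₁ ∩ invSet m w₂)
    (horth : PairwiseOrth B)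
    (hsimple : ∀ q ∈ invSet m w₁, IsSimplePair q → q ∈ B) :
    ∀ p ∈ B, IsSimplePair p := by
  have ha : Function.Injective (w₁⁻¹ : Equiv.Perm (Fin m)) := Equiv.injective _
  have hb : Function.Injective (w₂⁻¹ : Equiv.Perm (Fin m)) := Equiv.injective _
  have hmem : ∀ x y : Fin m, (x, y) ∈ B ↔ x < y ∧ w₁⁻¹ y < w₁⁻¹ x ∧ w₂⁻¹ y < w₂⁻¹ x := by
    intro x y
    subst hB
    simp only [invSet, Finset.mem_inter, Finset.mem_filter, Finset.mem_univ, true_and]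
    tauto
  have hs : ∀ x y : Fin m, (x : ℕ) + 1 = y → w₁⁻¹ y < w₁⁻¹ x → (x, y) ∈ B := by
    intro x y hxy h
    refine hsimple _ ?_ hxy
    simp only [invSet, Finset.mem_filter, Finset.mem_univ, true_and]
    exact ⟨by rw [Fin.lt_def]; omega, h⟩
  generalize (w₁⁻¹ : Equiv.Perm (Fin m)) = a at *
  generalize (w₂⁻¹ : Equiv.Perm (Fin m)) = b at *
  rintro ⟨i, j⟩ hp
  by_contra hns
  simp only [IsSimplePair] at hns
  obtain ⟨hij, haij, hbij⟩ := (hmem i j).1 hp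
  have hij' : (i : ℕ) < j := hij
  have h1 : ∀ k, k < j → i < k → (i, k) ∉ B := by
    intro k hk _ hB'
    exact (horth _ hp _ hB' (by simp only [ne_eq, Prod.mk.injEq, true_and]; exact hk.ne')).1 rfl
  have h2 : ∀ k, k < j → i < k → (k, j) ∉ B := by
    intro k _ hk hB'
    exact (horth _ hp _ hB' (by simp only [ne_eq, Prod.mk.injEq, and_true]; exact hk.ne)).2.2.2 rfl
  -- each intermediate index is of one of two types
  have htype : ∀ k, k < j → i < k →
      (a k < a i ∧ b i < b k) ∨ (a i < a k ∧ b k < b j) := by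
    intro k hkj hik
    have e1 := h1 k hkj hik
    have e2 := h2 k hkj hik
    rw [hmem] at e1 e2
    have n1 := ha.ne hik.ne
    have n2 := ha.ne hkj.ne
    have n3 := hb.ne hik.ne
    have n4 := hb.ne hkj.ne
    generalize a i = ai, a j = aj, a k = ak, b i = bi, b j = bj, b k = bk at *
    omega
  have key : ∀ n : ℕ, ∀ k : Fin m, (k : ℕ) = i + 1 + n → k < j → a i < a k ∧ b k < b j := by
    intro n
    induction n with
    | zero =>
      intro k hk hkj
      have hik : i < k := by rw [Fin.lt_def]; omega
      rcases htype k hkj hik with h | h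
      · exact absurd (hs i k (by omega) h.1) (h1 k hkj hik)
      · exact h
    | succ n ih =>
      intro k hk hkj
      have hik : i < k := by rw [Fin.lt_def]; omega
      rcases htype k hkj hik with h | h
      · have hkm := k.isLt
        obtain ⟨c, hc⟩ : ∃ c : Fin m, (c : ℕ) = i + 1 + n := ⟨⟨i + 1 + n, by omega⟩, rfl⟩
        have hcj : c < j := by rw [Fin.lt_def] at hkj ⊢; omega
        have e := ih c hc hcj
        have hck := hs c k (by omega) (h.1.trans e.1)
        have := ((hmem c k).1 hck).2.2
        exact absurd (this.trans (e.2.trans (hbij.trans h.2))) (lt_irrefl _)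
      · exact h
  have hjm := j.isLt
  obtain ⟨c, hc⟩ : ∃ c : Fin m, (c : ℕ) + 1 = j :=
    ⟨⟨j - 1, by omega⟩, by simp only; omega⟩
  have hcj : c < j := by rw [Fin.lt_def]; omega
  have e := key (c - (i + 1)) c (by omega) hcj
  exact h2 c hcj (by rw [Fin.lt_def]; omega) (hs c j hc (haij.trans e.1))
end

section
/- Let w₁, w₂ ∈ S_m and set B := N(w₁) ∩ N(w₂). Assume B is nonempty and pairwise orthogonal. Then there exist u, x, v ∈ S_m with w₁ = u·x·v, |N(w₁)| = |N(u)| + |N(x)| + |N(v)|, |N(x)| = |B|, and B = {(u(i), u(j)) : (i,j) ∈ N(x)}, where moreover u(i) < u(j) for every (i,j) ∈ N(x). (Equivalently: w₁ admits a reduced expression in which the roots of B occur as a consecutive block β_i, …, β_{i+|B|−1}.) -/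
lemma mem_invSet' {m : ℕ} (w : Equiv.Perm (Fin m)) (i j : Fin m) :
    (i, j) ∈ invSet m w ↔ i < j ∧ w⁻¹ j < w⁻¹ i := by
  simp [invSet]

/-- Length-additive factorization from containment of inversion sets. -/
lemma image_invSet {m : ℕ} (u w : Equiv.Perm (Fin m)) (h : invSet m u ⊆ invSet m w) :
    (invSet m (u⁻¹ * w)).image (fun p => (u p.1, u p.2)) = invSet m w \ invSet m u := by
  ext ⟨i, j⟩
  simp only [Finset.mem_image, Finset.mem_sdiff, mem_invSet', Prod.exists, Prod.mk.injEq]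
  constructor
  · rintro ⟨a, b, hab, rfl, rfl⟩
    obtain ⟨h1, h2⟩ := hab
    simp only [mul_inv_rev, inv_inv, Equiv.Perm.mul_apply] at h2
    have hinv : ∀ z, u⁻¹ (u z) = z := fun z => u.symm_apply_apply z
    rw [hinv, hinv]
    have hne : u a ≠ u b := fun e => h1.ne (u.injective e)
    rcases lt_or_gt_of_ne hne with hl | hl
    · exact ⟨⟨hl, h2⟩, fun hh => absurd hh.2 (not_lt.2 h1.le)⟩
    · have hm : (u b, u a) ∈ invSet m u := by
        rw [mem_invSet']
        simpa using ⟨hl, h1⟩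
      have := h hm
      rw [mem_invSet'] at this
      exact absurd this.2 (not_lt.2 h2.le)
  · rintro ⟨⟨h1, h2⟩, h3⟩
    refine ⟨u⁻¹ i, u⁻¹ j, ?_, by simp, by simp⟩
    have h4 : ¬ u⁻¹ j < u⁻¹ i := fun hh => h3 ⟨h1, hh⟩
    have h5 : u⁻¹ i ≠ u⁻¹ j := fun e => h1.ne (u⁻¹.injective e)
    refine ⟨lt_of_le_of_ne (not_lt.1 h4) h5, ?_⟩
    simpa using h2

lemma card_invSet {m : ℕ} (u w : Equiv.Perm (Fin m)) (h : invSet m u ⊆ invSet m w) :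
    (invSet m w).card = (invSet m u).card + (invSet m (u⁻¹ * w)).card := by
  have h1 := congrArg Finset.card (image_invSet u w h)
  rw [Finset.card_image_of_injective] at h1
  · rw [h1, add_comm, Finset.card_sdiff_add_card_eq_card h]
  · rintro ⟨a, b⟩ ⟨c, d⟩ e
    simpa using e

/-- Standardization of an injective map to a linear order. -/
lemma exists_perm {m : ℕ} {β : Type*} [LinearOrder β] (f : Fin m → β)
    (hf : Function.Injective f) :
    ∃ π : Equiv.Perm (Fin m), ∀ a b, π⁻¹ a < π⁻¹ b ↔ f a < f b := by
  let s : Finset β := Finset.univ.image f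
  have hs : s.card = m := by
    simp [s, Finset.card_image_of_injective _ hf]
  let e := s.orderIsoOfFin hs
  have hmem : ∀ a, f a ∈ s := fun a => Finset.mem_image_of_mem f (Finset.mem_univ a)
  let φ : Fin m → Fin m := fun a => e.symm ⟨f a, hmem a⟩
  have hφ : ∀ a b, φ a < φ b ↔ f a < f b := by
    intro a b
    simp [φ]
  have hinj : Function.Injective φ := by
    intro a b hab
    have : (⟨f a, hmem a⟩ : s) = ⟨f b, hmem b⟩ := e.symm.injective hab
    exact hf (Subtype.mk.inj this)
  have hbij : Function.Bijective φ := Finite.injective_iff_bijective.1 hinj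
  refine ⟨(Equiv.ofBijective φ hbij)⁻¹, fun a b => ?_⟩
  rw [inv_inv]
  exact hφ a b

/-- Iterates of a relation. -/
def relPow {α : Type*} (T : α → α → Prop) : ℕ → α → α → Prop
  | 0, a, b => a = b
  | n + 1, a, b => ∃ c, T a c ∧ relPow T n c b

lemma relPow_succ' {α : Type*} (T : α → α → Prop) (n : ℕ) (a b : α) :
    relPow T (n + 1) a b ↔ ∃ c, relPow T n a c ∧ T c b := by
  induction n generalizing a with
  | zero => simp [relPow]
  | succ n ih =>
    constructor
    · rintro ⟨c, h1, h2⟩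
      obtain ⟨d, h3, h4⟩ := (ih c).1 h2
      exact ⟨d, ⟨c, h1, h3⟩, h4⟩
    · rintro ⟨d, ⟨c, h1, h3⟩, h4⟩
      exact ⟨c, h1, (ih c).2 ⟨d, h3, h4⟩⟩

section acyclic

universe uα

variable {α : Type uα} (P E : α → α → Prop)

/-- Arrow between blocks. -/
def blkArrow (a b : α) : Prop := ∃ f, E a f ∧ P f b

/-- One step on a closed path of minimal length. -/
lemma min_cycle_step (hP : ∀ a b c, P a b → P b c → P a c)
    (hEr : ∀ a, E a a) (hEs : ∀ a b, E a b → E b a)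
    (hPE : ∀ a b, P a b → ¬ E a b) (k : ℕ)
    (ih : ∀ j, 1 ≤ j → j < k → ∀ a, ¬ relPow (blkArrow P E) j a a) (hk : 1 ≤ k)
    (e₀ : α) (h : relPow (blkArrow P E) k e₀ e₀) :
    ∃ f₀ e₁ f₁, relPow (blkArrow P E) k e₁ e₁ ∧ E e₀ f₀ ∧ P f₀ e₁ ∧ E e₁ f₁ ∧
      ¬ P e₀ e₁ ∧ ¬ P f₀ f₁ ∧ f₀ ≠ e₀ ∧ f₁ ≠ e₁ := by
  obtain ⟨n, rfl⟩ : ∃ n, k = n + 1 := ⟨k - 1, by omega⟩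
  obtain ⟨e₁, ⟨f₀, h1, h2⟩, h3⟩ := h
  rcases n with _ | n
  · have : e₁ = e₀ := h3
    subst this
    exact absurd (hEs _ _ h1) (hPE _ _ h2)
  · have hS : relPow (blkArrow P E) (n + 1 + 1) e₁ e₁ :=
      (relPow_succ' _ _ _ _).2 ⟨e₀, h3, f₀, h1, h2⟩
    have hA : ¬ P e₀ e₁ := by
      intro hp
      obtain ⟨d, h4, f, h5, h6⟩ := (relPow_succ' _ _ _ _).1 h3
      exact ih (n + 1) (by omega) (by omega) e₁
        ((relPow_succ' _ _ _ _).2 ⟨d, h4, f, h5, hP _ _ _ h6 hp⟩)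
    obtain ⟨e₂, ⟨f₁, h4, h5⟩, h6⟩ := h3
    have hBB : ¬ P f₀ f₁ := fun hp =>
      ih (n + 1) (by omega) (by omega) e₀ ⟨e₂, ⟨f₀, h1, hP _ _ _ hp h5⟩, h6⟩
    exact ⟨f₀, e₁, f₁, hS, h1, h2, h4, hA, hBB, fun e => hA (e ▸ h2), fun e => hBB (e ▸ h2)⟩

lemma path_normal (hEr : ∀ a, E a a) (hEt : ∀ a b c, E a b → E b c → E a c) (a b : α)
    (h : Relation.ReflTransGen (fun x y => P x y ∨ E x y) a b) :
    E a b ∨ ∃ k b', 1 ≤ k ∧ relPow (blkArrow P E) k a b' ∧ E b' b := by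
  induction h with
  | refl => exact Or.inl (hEr a)
  | @tail b c _ hs ih =>
    rcases hs with hs | hs
    · rcases ih with ih | ⟨k, b', hk, h1, h2⟩
      · exact Or.inr ⟨1, c, le_rfl, ⟨c, ⟨b, ih, hs⟩, rfl⟩, hEr c⟩
      · exact Or.inr ⟨k + 1, c, by omega, (relPow_succ' _ _ _ _).2 ⟨b', h1, b, h2, hs⟩, hEr c⟩
    · rcases ih with ih | ⟨k, b', hk, h1, h2⟩
      · exact Or.inl (hEt _ _ _ ih hs)
      · exact Or.inr ⟨k, b', hk, h1, hEt _ _ _ h2 hs⟩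

lemma relPow_congr_left (hEt : ∀ a b c, E a b → E b c → E a c) (a a' b : α) (k : ℕ)
    (hk : 1 ≤ k) (h : relPow (blkArrow P E) k a b) (he : E a' a) :
    relPow (blkArrow P E) k a' b := by
  obtain ⟨n, rfl⟩ : ∃ n, k = n + 1 := ⟨k - 1, by omega⟩
  obtain ⟨c, ⟨f, h1, h2⟩, h3⟩ := h
  exact ⟨c, ⟨f, hEt _ _ _ he h1, h2⟩, h3⟩

lemma relPow_add (T : α → α → Prop) (k l : ℕ) (a b c : α)
    (h1 : relPow T k a b) (h2 : relPow T l b c) : relPow T (k + l) a c := by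
  induction k generalizing a with
  | zero =>
    have : a = b := h1
    subst this
    simpa using h2
  | succ n ih =>
    obtain ⟨d, h3, h4⟩ := h1
    rw [Nat.add_right_comm]
    exact ⟨d, h3, ih d h4⟩

lemma antisymm_of_acyclic (hEr : ∀ a, E a a) (hEs : ∀ a b, E a b → E b a)
    (hEt : ∀ a b c, E a b → E b c → E a c)
    (hac : ∀ k, 1 ≤ k → ∀ a, ¬ relPow (blkArrow P E) k a a) (a b : α)
    (h : Relation.ReflTransGen (fun x y => P x y ∨ E x y) a b)
    (h' : Relation.ReflTransGen (fun x y => P x y ∨ E x y) b a) : E a b := by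
  rcases path_normal P E hEr hEt a b h with h | ⟨k, b', hk, h1, h2⟩
  · exact h
  exfalso
  rcases path_normal P E hEr hEt b a h' with h' | ⟨l, a', hl, h3, h4⟩
  · exact hac k hk b' (relPow_congr_left P E hEt a b' b' k hk h1 (hEt _ _ _ h2 h'))
  · have h5 := relPow_congr_left P E hEt b b' a' l hl h3 h2
    have h6 := relPow_add _ _ _ _ _ _ h1 h5
    exact hac (k + l) (by omega) a' (relPow_congr_left P E hEt a a' a' _ (by omega) h6 h4)

lemma exists_linear (hanti : ∀ a b,
      Relation.ReflTransGen (fun x y => P x y ∨ E x y) a b →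
      Relation.ReflTransGen (fun x y => P x y ∨ E x y) b a → E a b)
    (hEs : ∀ a b, E a b → E b a) :
    ∃ (β : Type uα) (_ : LinearOrder β) (g : α → β),
      (∀ a b, g a = g b ↔ E a b) ∧ ∀ a b, P a b → g a ≤ g b := by
  let pre : Preorder α :=
    { le := Relation.ReflTransGen (fun x y => P x y ∨ E x y)
      le_refl := fun a => Relation.ReflTransGen.refl
      le_trans := fun a b c => Relation.ReflTransGen.trans }
  refine ⟨LinearExtension (Antisymmetrization α (· ≤ ·)), inferInstance,
    fun a => toLinearExtension (toAntisymmetrization (· ≤ ·) a), ?_, ?_⟩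
  · intro a b
    have h0 : (toLinearExtension (toAntisymmetrization (α := α) (· ≤ ·) a) =
        toLinearExtension (toAntisymmetrization (· ≤ ·) b)) ↔
        (toAntisymmetrization (α := α) (· ≤ ·) a = toAntisymmetrization (· ≤ ·) b) := Iff.rfl
    rw [h0]
    constructor
    · intro h
      have h1 : AntisymmRel (· ≤ ·) a b := Quotient.exact h
      exact hanti a b h1.1 h1.2
    · intro h
      apply Quotient.sound
      exact ⟨Relation.ReflTransGen.single (Or.inr h),
        Relation.ReflTransGen.single (Or.inr (hEs _ _ h))⟩
  · intro a b h
    apply toLinearExtension.monotone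
    have : a ≤ b := Relation.ReflTransGen.single (Or.inl h)
    exact this

end acyclic

/-- If `B = N(w₁) ∩ N(w₂)` is nonempty and pairwise orthogonal, then `w₁` admits a
reduced expression in which the roots of `B` occur as a consecutive block. -/
theorem consecutive_block {m : ℕ} (w₁ w₂ : Equiv.Perm (Fin m))
    (B : Finset (Fin m × Fin m)) (hB : B = invSet m w₁ ∩ invSet m w₂)
    (hne : B.Nonempty) (horth : PairwiseOrth B) :
    ∃ u x v : Equiv.Perm (Fin m), w₁ = u * x * v ∧
      (invSet m w₁).card = (invSet m u).card + (invSet m x).card + (invSet m v).card ∧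
      (invSet m x).card = B.card ∧
      B = (invSet m x).image (fun p => (u p.1, u p.2)) ∧
      ∀ p ∈ invSet m x, u p.1 < u p.2 := by
  have hmem : ∀ i j, (i, j) ∈ B ↔ i < j ∧ w₁⁻¹ j < w₁⁻¹ i ∧ w₂⁻¹ j < w₂⁻¹ i := by
    intro i j
    rw [hB, Finset.mem_inter, mem_invSet', mem_invSet']
    tauto
  have horth' : ∀ a b c d, (a, b) ∈ B → (c, d) ∈ B →
      (a = c ∨ a = d ∨ b = c ∨ b = d) → a = c ∧ b = d := by
    intro a b c d h1 h2 h3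
    by_contra hcon
    have := horth _ h1 _ h2 (by simpa using hcon)
    simp only [OrthPair] at this
    tauto
  let P : Fin m → Fin m → Prop := fun a b => a < b ∧ w₁⁻¹ a < w₁⁻¹ b
  let E : Fin m → Fin m → Prop := fun a b => a = b ∨ (a, b) ∈ B ∨ (b, a) ∈ B
  have hEr : ∀ a, E a a := fun a => Or.inl rfl
  have hEs : ∀ a b, E a b → E b a := by
    intro a b h
    simp only [E] at *
    tauto
  have hEt : ∀ a b c, E a b → E b c → E a c := by
    rintro a b c (rfl | h | h) (rfl | h' | h')
    · exact Or.inl rfl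
    · exact Or.inr (Or.inl h')
    · exact Or.inr (Or.inr h')
    · exact Or.inr (Or.inl h)
    · have := horth' _ _ _ _ h h' (by tauto)
      exact absurd this.1 ((hmem _ _).1 h).1.ne
    · exact Or.inl (horth' _ _ _ _ h h' (by tauto)).1
    · exact Or.inr (Or.inr h)
    · exact Or.inl (horth' _ _ _ _ h h' (by tauto)).2
    · have := horth' _ _ _ _ h h' (by tauto)
      exact absurd this.1 ((hmem _ _).1 h').1.ne'
  have hP : ∀ a b c, P a b → P b c → P a c := fun a b c h1 h2 =>
    ⟨h1.1.trans h2.1, h1.2.trans h2.2⟩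
  have hPE : ∀ a b, P a b → ¬ E a b := by
    rintro a b ⟨h1, h2⟩ (h | h | h)
    · exact h1.ne h
    · exact absurd ((hmem _ _).1 h).2.1 (not_lt.2 h2.le)
    · exact absurd ((hmem _ _).1 h).1 (not_lt.2 h1.le)
  -- no up block followed by a down block
  have hkey : ∀ e₀ f₀ e₁ f₁, (e₀, f₀) ∈ B → (f₁, e₁) ∈ B → P f₀ e₁ → ¬ P e₀ e₁ →
      ¬ P f₀ f₁ → False := by
    intro e₀ f₀ e₁ f₁ h0 h1 hp hn1 hn2
    obtain ⟨a1, a2, a3⟩ := (hmem _ _).1 h0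
    obtain ⟨b1, b2, b3⟩ := (hmem _ _).1 h1
    have c1 : w₁⁻¹ f₀ < w₁⁻¹ f₁ := hp.2.trans b2
    have c2 : f₁ < f₀ := by
      rcases lt_trichotomy f₁ f₀ with h | h | h
      · exact h
      · rw [h] at c1
        exact absurd c1 (lt_irrefl _)
      · exact absurd ⟨h, c1⟩ hn2
    have c3 : (f₁, f₀) ∉ B := fun h =>
      hp.1.ne (horth' _ _ _ _ h h1 (Or.inl rfl)).2
    have c4 : w₂⁻¹ f₁ ≤ w₂⁻¹ f₀ := by
      by_contra hc
      exact c3 ((hmem _ _).2 ⟨c2, c1, not_le.1 hc⟩)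
    have c5 : w₂⁻¹ e₁ < w₂⁻¹ e₀ := b3.trans (c4.trans_lt a3)
    have c6 : e₀ < e₁ := a1.trans hp.1
    have c7 : (e₀, e₁) ∉ B := fun h =>
      hp.1.ne (horth' _ _ _ _ h0 h (Or.inl rfl)).2
    apply hn1
    refine ⟨c6, ?_⟩
    have c8 : w₁⁻¹ e₀ ≤ w₁⁻¹ e₁ := by
      by_contra hc
      exact c7 ((hmem _ _).2 ⟨c6, not_le.1 hc, c5⟩)
    exact lt_of_le_of_ne c8 (fun e => c6.ne (w₁⁻¹.injective e))
  have hac : ∀ k, 1 ≤ k → ∀ a, ¬ relPow (blkArrow P E) k a a := by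
    intro k
    induction k using Nat.strong_induction_on with
    | _ k ih =>
    intro hk a ha
    have hstep := fun e₀ h => min_cycle_step P E hP hEr hEs hPE k
      (fun j h1 h2 => ih j h2 h1) hk e₀ h
    classical
    by_cases hup : ∃ e, relPow (blkArrow P E) k e e ∧ ∃ f, (e, f) ∈ B
    · obtain ⟨e, he⟩ := hup
      let S : Finset (Fin m) :=
        Finset.univ.filter (fun e => relPow (blkArrow P E) k e e ∧ ∃ f, (e, f) ∈ B)
      have hS : S.Nonempty := ⟨e, by simpa [S] using he⟩
      obtain ⟨e₀, he₀, hmax⟩ := S.exists_max_image id hS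
      have he₀' := (Finset.mem_filter.1 he₀).2
      obtain ⟨hc, f, hf⟩ := he₀'
      obtain ⟨f₀, e₁, f₁, hc1, hE0, hp, hE1, hn1, hn2, hne0, hne1⟩ := hstep e₀ hc
      have hf0 : (e₀, f₀) ∈ B := by
        rcases hE0 with h | h | h
        · exact absurd h.symm hne0
        · exact h
        · have := horth' _ _ _ _ h hf (by tauto)
          exact absurd this.1 hne0
      rcases hE1 with h | h | h
      · exact hne1 h.symm
      · have h2 : e₁ ∈ S := Finset.mem_filter.2 ⟨Finset.mem_univ _, hc1, f₁, h⟩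
        have h3 : e₁ ≤ e₀ := hmax e₁ h2
        exact absurd (((hmem _ _).1 hf0).1.trans hp.1) (not_lt.2 h3)
      · exact hkey e₀ f₀ e₁ f₁ hf0 h hp hn1 hn2
    · let S : Finset (Fin m) :=
        Finset.univ.filter (fun e => relPow (blkArrow P E) k e e)
      have hS : S.Nonempty := ⟨a, by simpa [S] using ha⟩
      obtain ⟨e₀, he₀, hmax⟩ := S.exists_max_image (fun e => w₁⁻¹ e) hS
      have hc := (Finset.mem_filter.1 he₀).2
      obtain ⟨f₀, e₁, f₁, hc1, hE0, hp, hE1, hn1, hn2, hne0, hne1⟩ := hstep e₀ hc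
      rcases hE0 with h | h | h
      · exact hne0 h.symm
      · exact hup ⟨e₀, hc, f₀, h⟩
      · have h2 : e₁ ∈ S := Finset.mem_filter.2 ⟨Finset.mem_univ _, hc1⟩
        have h3 := hmax e₁ h2
        exact absurd (((hmem _ _).1 h).2.1.trans hp.2) (not_lt.2 h3)
  obtain ⟨β, _, g, hgE, hgP⟩ :=
    exists_linear P E (antisymm_of_acyclic P E hEr hEs hEt hac) hEs
  obtain ⟨u, hu⟩ := exists_perm (fun i : Fin m => toLex (g i, i)) (by
    intro a b h
    simpa using (congrArg (fun z => (ofLex z).2) h))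
  obtain ⟨y, hy⟩ := exists_perm (fun i : Fin m => toLex (g i, OrderDual.toDual i)) (by
    intro a b h
    simpa using (congrArg (fun z => (ofLex z).2) h))
  simp only [Prod.Lex.toLex_lt_toLex] at hu hy
  have hNu : ∀ i j, (i, j) ∈ invSet m u ↔ i < j ∧ g j < g i := by
    intro i j
    rw [mem_invSet', hu]
    constructor
    · rintro ⟨h1, h2 | h2⟩
      · exact ⟨h1, h2⟩
      · exact absurd h1 (not_lt.2 h2.2.le)
    · rintro ⟨h1, h2⟩
      exact ⟨h1, Or.inl h2⟩
  have hNy : ∀ i j, (i, j) ∈ invSet m y ↔ i < j ∧ (g j < g i ∨ (i, j) ∈ B) := by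
    intro i j
    rw [mem_invSet', hy]
    apply and_congr_right
    intro hij
    apply or_congr_right
    rw [hgE, OrderDual.toDual_lt_toDual]
    constructor
    · rintro ⟨h | h | h, -⟩
      · exact absurd h hij.ne'
      · exact absurd ((hmem _ _).1 h).1 (not_lt.2 hij.le)
      · exact h
    · intro h
      exact ⟨Or.inr (Or.inr h), hij⟩
  have hsub1 : invSet m u ⊆ invSet m y := by
    rintro ⟨i, j⟩ h
    rw [hNu] at h
    rw [hNy]
    exact ⟨h.1, Or.inl h.2⟩
  have hsub2 : invSet m y ⊆ invSet m w₁ := by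
    rintro ⟨i, j⟩ h
    rw [hNy] at h
    rw [mem_invSet']
    refine ⟨h.1, ?_⟩
    rcases h.2 with h2 | h2
    · by_contra hc
      have h3 : w₁⁻¹ i < w₁⁻¹ j :=
        lt_of_le_of_ne (not_lt.1 hc) (fun e => h.1.ne (w₁⁻¹.injective e))
      exact absurd h2 (not_lt.2 (hgP i j ⟨h.1, h3⟩))
    · exact ((hmem _ _).1 h2).2.1
  have hdiff : invSet m y \ invSet m u = B := by
    ext ⟨i, j⟩
    rw [Finset.mem_sdiff, hNy, hNu]
    constructor
    · rintro ⟨⟨h1, h2 | h2⟩, h3⟩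
      · exact absurd ⟨h1, h2⟩ h3
      · exact h2
    · intro h
      have h1 := ((hmem _ _).1 h).1
      refine ⟨⟨h1, Or.inr h⟩, fun h2 => ?_⟩
      exact h2.2.ne' ((hgE i j).2 (Or.inr (Or.inl h)))
  have himg := image_invSet u y hsub1
  rw [hdiff] at himg
  have hc1 := card_invSet u y hsub1
  have hc2 := card_invSet y w₁ hsub2
  refine ⟨u, u⁻¹ * y, y⁻¹ * w₁, by group, by omega, ?_, himg.symm, ?_⟩
  · rw [← himg, Finset.card_image_of_injective]
    rintro ⟨a, b⟩ ⟨c, d⟩ e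
    simpa using e
  · intro p hp
    have : (u p.1, u p.2) ∈ B := by
      rw [← himg]
      exact Finset.mem_image_of_mem (fun p : Fin m × Fin m => (u p.1, u p.2)) hp
    exact ((hmem _ _).1 this).1
end

section
/- Let w₁, w₂ ∈ S_m and suppose N(w₁) ∩ N(w₂) = {(k, k+1)} consists of a single simple pair. Then there exist w₁', w₂' ∈ S_m with N(w₁) ⊆ N(w₁'), N(w₂) ⊆ N(w₂'), N(w₁') ∩ N(w₂') = {(k, k+1)}, and N(w₁') ∪ N(w₂') = {(i,j) | 1 ≤ i < j ≤ m}. -/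
/-- A permutation realizing the order given by an injective lexicographic key. -/
lemma exists_perm_key {m : ℕ} (c p : Fin m → ℤ) (hp : Function.Injective p) :
    ∃ w : Equiv.Perm (Fin m), ∀ x y, w⁻¹ x < w⁻¹ y ↔ (c x < c y ∨ (c x = c y ∧ p x < p y)) := by
  let f : Fin m → ℤ ×ₗ ℤ := fun x => toLex (c x, p x)
  have hf : Function.Injective f := by
    intro x y h
    have h2 : (c x, p x) = (c y, p y) := toLex.injective h
    exact hp (Prod.ext_iff.mp h2).2
  have hm : StrictMono (f ∘ Tuple.sort f) :=
    (Tuple.monotone_sort f).strictMono_of_injective (hf.comp (Tuple.sort f).injective)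
  refine ⟨Tuple.sort f, fun x y => ?_⟩
  rw [← hm.lt_iff_lt]
  simp [f, Prod.Lex.toLex_lt_toLex]

/-- Block of an element in the modified order, with prescribed blocks for the simple pair. -/
def blk {m : ℕ} (p : Fin m → ℤ) (k k' : Fin m) (s t : ℤ) (x : Fin m) : ℤ :=
  if x = k' then s else if x = k then t else
  if p x < p k' then 0 else if p k < p x then 5 else if k' < x then 1 else 4

/-- The fill-up theorem for `B = {(k, k+1)}` a single simple pair. -/
theorem fillup_single_simple {m : ℕ} (w₁ w₂ : Equiv.Perm (Fin m))
    (k k' : Fin m) (hk : (k : ℕ) + 1 = (k' : ℕ))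
    (hB : invSet m w₁ ∩ invSet m w₂ = {(k, k')}) :
    ∃ w₁' w₂' : Equiv.Perm (Fin m),
      invSet m w₁ ⊆ invSet m w₁' ∧ invSet m w₂ ⊆ invSet m w₂' ∧
      invSet m w₁' ∩ invSet m w₂' = {(k, k')} ∧
      invSet m w₁' ∪ invSet m w₂' = Finset.univ.filter (fun p => p.1 < p.2) := by
  have hlt : k < k' := by rw [Fin.lt_def]; omega
  have key : ∀ i j : Fin m, i < j → ((w₁⁻¹ j < w₁⁻¹ i ∧ w₂⁻¹ j < w₂⁻¹ i) ↔ (i = k ∧ j = k')) := by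
    intro i j hij
    have := Finset.ext_iff.mp hB (i, j)
    simpa [invSet, hij] using this
  let p : Fin m → ℤ := fun x => ((w₁⁻¹ x : Fin m) : ℕ)
  let q : Fin m → ℤ := fun x => ((w₂⁻¹ x : Fin m) : ℕ)
  have hpl : ∀ x y, w₁⁻¹ x < w₁⁻¹ y ↔ p x < p y := by intro x y; simp [p]
  have hql : ∀ x y, w₂⁻¹ x < w₂⁻¹ y ↔ q x < q y := by intro x y; simp [q]
  have hpi : Function.Injective p := by
    intro x y h
    simpa [p, Fin.val_inj] using h
  have hqi : Function.Injective q := by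
    intro x y h
    simpa [q, Fin.val_inj] using h
  simp only [hpl, hql] at key
  obtain ⟨hpk, hqk⟩ := (key k k' hlt).2 ⟨rfl, rfl⟩
  obtain ⟨u, hu⟩ := exists_perm_key (blk p k k' 2 3) p hpi
  obtain ⟨v, hv⟩ := exists_perm_key (fun x => - blk p k k' 3 2 x) (fun x => - p x)
    (fun x y h => hpi (neg_injective h))
  have hmid : ∀ x : Fin m, x ≠ k → x ≠ k' → x < k ∨ k' < x := by
    intro x h1 h2
    simp only [Fin.lt_def, ne_eq, Fin.ext_iff] at *
    omega
  -- the new order contains the old inversions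
  have A : ∀ i j : Fin m, i < j → p j < p i → u⁻¹ j < u⁻¹ i := by
    intro i j hij h
    rw [hu]
    have := hmid i
    have := hmid j
    unfold blk
    grind
  -- inversions of the new order are not inversions of `w₂`
  have B : ∀ i j : Fin m, i < j → u⁻¹ j < u⁻¹ i → q j < q i → (i = k ∧ j = k') := by
    intro i j hij h h2
    rw [hu] at h
    have e1 := hmid i
    have e2 := hmid j
    have e3 := key i j hij
    have e4 := key i k'
    have e5 := key k j
    have e6 := @hpi i j
    have e7 := @hpi i k
    have e8 := @hpi i k'
    have e9 := @hpi j k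
    have e10 := @hpi j k'
    clear key A hu hv hmid hpl hql hB hpi hqi
    clear_value p q
    unfold blk at h
    split_ifs at h <;> grind
  have C : ∀ i j : Fin m, i < j →
      (v⁻¹ j < v⁻¹ i ↔ (¬ u⁻¹ j < u⁻¹ i ∨ (i = k ∧ j = k'))) := by
    intro i j hij
    rw [hu, hv]
    have e1 := hmid i
    have e2 := hmid j
    have e6 := @hpi i j
    unfold blk
    grind
  have D : u⁻¹ k' < u⁻¹ k := A k k' hlt hpk
  refine ⟨u, v, ?_, ?_, ?_, ?_⟩
  · rintro ⟨i, j⟩ h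
    simp only [invSet, Finset.mem_filter, Finset.mem_univ, true_and, hpl] at h ⊢
    exact ⟨h.1, A i j h.1 h.2⟩
  · rintro ⟨i, j⟩ h
    simp only [invSet, Finset.mem_filter, Finset.mem_univ, true_and, hql] at h ⊢
    refine ⟨h.1, (C i j h.1).2 ?_⟩
    by_cases h' : u⁻¹ j < u⁻¹ i
    · exact Or.inr (B i j h.1 h' h.2)
    · exact Or.inl h'
  · ext ⟨i, j⟩
    simp only [invSet, Finset.mem_inter, Finset.mem_filter, Finset.mem_univ, true_and,
      Finset.mem_singleton, Prod.mk.injEq]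
    constructor
    · rintro ⟨⟨h1, h2⟩, -, h3⟩
      exact ((C i j h1).1 h3).resolve_left (not_not_intro h2)
    · rintro ⟨rfl, rfl⟩
      exact ⟨⟨hlt, D⟩, hlt, (C _ _ hlt).2 (Or.inr ⟨rfl, rfl⟩)⟩
  · ext ⟨i, j⟩
    simp only [invSet, Finset.mem_union, Finset.mem_filter, Finset.mem_univ, true_and]
    constructor
    · rintro (h | h) <;> exact h.1
    · intro h
      by_cases h' : u⁻¹ j < u⁻¹ i
      · exact Or.inl ⟨h, h'⟩
      · exact Or.inr ⟨h, (C i j h).2 (Or.inl h')⟩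
end

section
/- Let w₁, w₂ ∈ S_m and set B := N(w₁) ∩ N(w₂). Assume B is nonempty and pairwise orthogonal. Then there exist w₁', w₂' ∈ S_m with N(w₁) ⊆ N(w₁'), N(w₂) ⊆ N(w₂'), N(w₁') ∩ N(w₂') = B, and N(w₁') ∪ N(w₂') = {(i,j) | 1 ≤ i < j ≤ m}. -/
section Fillup

variable {m : ℕ}

/-- `x < y` is inverted by both position functions. -/
def FB (p q : Fin m → Fin m) (x y : Fin m) : Prop := x < y ∧ p y < p x ∧ q y < q x

/-- same block -/
def FS (p q : Fin m → Fin m) (x y : Fin m) : Prop := x = y ∨ FB p q x y ∨ FB p q y x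

/-- `x` is forced to precede `y`. -/
def FE (p q : Fin m → Fin m) (x y : Fin m) : Prop :=
  (x < y ∧ q y < q x) ∨ (y < x ∧ p x < p y)

/-- orthogonality -/
def FO (p q : Fin m → Fin m) : Prop := ∀ a b c d, FB p q a b → FB p q c d →
  (a = c ∧ b = d) ∨ (a ≠ c ∧ a ≠ d ∧ b ≠ c ∧ b ≠ d)

theorem FS_equiv (p q : Fin m → Fin m) (ho : FO p q) : Equivalence (FS p q) := by
  refine ⟨fun x => Or.inl rfl, ?_, ?_⟩
  · rintro x y (h | h | h)
    · exact Or.inl h.symm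
    · exact Or.inr (Or.inr h)
    · exact Or.inr (Or.inl h)
  · rintro x y z (h | h | h) (h' | h' | h')
    · exact Or.inl (h.trans h')
    · subst h; exact Or.inr (Or.inl h')
    · subst h; exact Or.inr (Or.inr h')
    · subst h'; exact Or.inr (Or.inl h)
    · have := ho _ _ _ _ h h'; have := h.1; grind
    · have := ho _ _ _ _ h h'; left; grind
    · subst h'; exact Or.inr (Or.inr h)
    · have := ho _ _ _ _ h h'; left; grind
    · have := ho _ _ _ _ h h'; have := h.1; grind

/-- Every nonempty union of blocks has a source block. -/
theorem F_source (p q : Fin m → Fin m) (hp : p.Injective) (hq : q.Injective) (ho : FO p q)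
    (T : Set (Fin m)) (hT : T.Nonempty) (sat : ∀ x ∈ T, ∀ y, FS p q x y → y ∈ T) :
    ∃ c ∈ T, ∀ y ∈ T, ∀ d, FS p q c d → FE p q y d → FS p q c y := by
  by_contra hcon
  push Not at hcon
  have key : ∀ n : ℕ, ∀ c : Fin m, c.val = n → c ∈ T → (∀ y ∈ T, y ≤ c → q y ≤ q c) →
      (∀ y ∈ T, FE p q y c → FS p q c y) → False := by
    intro n
    induction n using Nat.strong_induction_on with
    | _ n ih =>
    intro c hcn hc hmax hpred
    obtain ⟨x, hx, d, hcd, hxd, hcx⟩ := hcon c hc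
    have hd : d ∈ T := sat c hc d hcd
    have hcd' : FB p q c d := by
      rcases hcd with h | h | h
      · subst h; exact absurd (hpred x hx hxd) hcx
      · exact h
      · have := hmax d hd h.1.le
        exact absurd h.2.2 (not_lt.mpr this)
    have hxc : ¬ FE p q x c := fun h => hcx (hpred x hx h)
    obtain ⟨h1, h2, h3⟩ := hcd'
    have hne : x ≠ c := fun h => hcx (Or.inl h.symm)
    have hpn : p x ≠ p c := fun h => hne (hp h)
    have hqn : q x ≠ q c := fun h => hne (hq h)
    have hxlt : x < c ∧ q d < q x := by
      have hBxd : ¬ FB p q x d := fun h => by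
        have := ho _ _ _ _ h ⟨h1, h2, h3⟩
        tauto
      unfold FS at hcx
      unfold FB at hcx hBxd
      unfold FE at hxd hxc
      clear hcon ih sat hmax hpred hcd ho
      grind
    obtain ⟨x0, ⟨hx0T, hx0c⟩, hx0max⟩ := Set.exists_max_image {y | y ∈ T ∧ y < c} q
      (Set.toFinite _) ⟨x, hx, hxlt.1⟩
    have hx0x : q x ≤ q x0 := hx0max x ⟨hx, hxlt.1⟩
    have hBx0c : ¬ FB p q x0 c := fun h => by
      have := ho _ _ _ _ h ⟨h1, h2, h3⟩
      grind
    have hBx0d : ¬ FB p q x0 d := fun h => by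
      have := ho _ _ _ _ h ⟨h1, h2, h3⟩
      grind
    have hpx0 : p x0 < p d := by
      have : p x0 ≠ p d := fun h => by have := hp h; grind
      unfold FB at hBx0d
      grind
    refine ih x0.val (by omega) x0 rfl hx0T ?_ ?_
    · intro y hy hyx
      exact hx0max y ⟨hy, lt_of_le_of_lt hyx hx0c⟩
    · intro y hy hyE
      rcases hyE with ⟨ha, hb⟩ | ⟨ha, hb⟩
      · have := hx0max y ⟨hy, ha.trans hx0c⟩
        grind
      · rcases lt_trichotomy y c with h | h | h
        · have h5 := hx0max y ⟨hy, h⟩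
          have : q y ≠ q x0 := fun h => by have := hq h; grind
          exact Or.inr (Or.inl ⟨ha, hb, lt_of_le_of_ne h5 this⟩)
        · subst h; grind
        · have h6 := hpred y hy (Or.inr ⟨h, by grind⟩)
          rcases h6 with h6 | h6 | h6
          · grind
          · have := ho _ _ _ _ h6 ⟨h1, h2, h3⟩
            grind
          · have := h6.1; grind
  obtain ⟨c, hc, hcm⟩ := Set.exists_max_image T q (Set.toFinite _) hT
  refine key c.val c rfl hc (fun y hy _ => hcm y hy) ?_
  intro y hy hyE
  have := hcm y hy
  rcases hyE with ⟨ha, hb⟩ | ⟨ha, hb⟩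
  · grind
  · have : q y ≠ q c := fun h => by have := hq h; grind
    exact Or.inr (Or.inl ⟨ha, hb, by grind⟩)

/-- A block key compatible with all forced relations. -/
theorem F_key (p q : Fin m → Fin m) (hp : p.Injective) (hq : q.Injective) (ho : FO p q) :
    ∃ k : Fin m → Lex (Ordinal.{0} × Fin m), (∀ x y, k x = k y ↔ FS p q x y) ∧
      ∀ x y, FE p q x y → FS p q x y ∨ k x < k y := by
  have he := FS_equiv p q ho
  let s : Setoid (Fin m) := ⟨FS p q, he⟩
  let R : Fin m → Fin m → Prop := fun x y =>
    ¬ FS p q x y ∧ ∃ x' y', FS p q x x' ∧ FS p q y y' ∧ FE p q x' y'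
  have wf : WellFounded R := by
    rw [WellFounded.wellFounded_iff_has_min]
    intro S hS
    obtain ⟨a, ha⟩ := hS
    obtain ⟨c, ⟨t, ht, htc⟩, hc⟩ := F_source p q hp hq ho {x | ∃ t ∈ S, FS p q t x}
      ⟨a, a, ha, he.refl a⟩
      (by rintro x ⟨t, ht, htx⟩ y hxy; exact ⟨t, ht, he.trans htx hxy⟩)
    refine ⟨t, ht, ?_⟩
    rintro x hx ⟨hn, x', y', hxx, hty, hE⟩
    have := hc x' ⟨x, hx, hxx⟩ y' (he.trans (he.symm htc) hty) hE
    exact hn (he.trans hxx (he.trans (he.symm this) (he.symm htc)))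
  haveI : IsWellFounded (Fin m) R := ⟨wf⟩
  let b : Fin m → Fin m := fun x => Quotient.out (Quotient.mk s x)
  have hb : ∀ x, FS p q (b x) x := fun x => Quotient.mk_out (s := s) x
  have hbe : ∀ x y, FS p q x y → b x = b y := fun x y h => by
    have : Quotient.mk s x = Quotient.mk s y := Quotient.sound h
    simp only [b, this]
  refine ⟨fun x => toLex (IsWellFounded.rank R (b x), b x), ?_, ?_⟩
  · intro x y
    constructor
    · intro h
      have h2 : b x = b y := congrArg Prod.snd (toLex.injective h)
      have := hb x
      rw [h2] at this
      exact he.trans (he.symm this) (hb y)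
    · intro h
      simp only [hbe x y h]
  · intro x y hE
    by_cases h : FS p q x y
    · exact Or.inl h
    · right
      refine Prod.Lex.toLex_lt_toLex.mpr (Or.inl (IsWellFounded.rank_lt_of_rel ?_))
      refine ⟨fun h' => h (he.trans (he.symm (hb x)) (he.trans h' (hb y))), x, y, hb x, hb y, hE⟩

theorem F_sort {α : Type*} [LinearOrder α] (f : Fin m → α) (hf : f.Injective) :
    ∃ w : Equiv.Perm (Fin m), ∀ x y, w⁻¹ x < w⁻¹ y ↔ f x < f y := by
  refine ⟨Tuple.sort f, fun x y => ?_⟩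
  have h : StrictMono (f ∘ Tuple.sort f) :=
    (Tuple.monotone_sort f).strictMono_of_injective (hf.comp (Equiv.injective _))
  have := h.lt_iff_lt (a := (Tuple.sort f)⁻¹ x) (b := (Tuple.sort f)⁻¹ y)
  simpa using this.symm

end Fillup

theorem fillup_general {m : ℕ} (w₁ w₂ : Equiv.Perm (Fin m))
    (B : Finset (Fin m × Fin m)) (hB : B = invSet m w₁ ∩ invSet m w₂)
    (hne : B.Nonempty) (horth : PairwiseOrth B) :
    ∃ w₁' w₂' : Equiv.Perm (Fin m),
      invSet m w₁ ⊆ invSet m w₁' ∧ invSet m w₂ ⊆ invSet m w₂' ∧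
      invSet m w₁' ∩ invSet m w₂' = B ∧
      invSet m w₁' ∪ invSet m w₂' = Finset.univ.filter (fun p => p.1 < p.2) := by
  set p : Fin m → Fin m := fun x => w₁⁻¹ x with hpdef
  set q : Fin m → Fin m := fun x => w₂⁻¹ x with hqdef
  have hp : p.Injective := (w₁⁻¹).injective
  have hq : q.Injective := (w₂⁻¹).injective
  have hmem : ∀ x y, (x, y) ∈ B ↔ FB p q x y := by
    intro x y
    subst hB
    simp only [invSet, FB, Finset.mem_inter, Finset.mem_filter, Finset.mem_univ, true_and, p, q]
    tauto
  have ho : FO p q := by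
    intro a b c d h h'
    by_cases he : (a, b) = (c, d)
    · left; simpa using he
    · right; exact horth _ ((hmem _ _).2 h) _ ((hmem _ _).2 h') he
  obtain ⟨k, hk, hlt⟩ := F_key p q hp hq ho
  obtain ⟨v₁, hv₁⟩ := F_sort (fun x => toLex (k x, OrderDual.toDual x))
    (fun x y h => OrderDual.toDual.injective (congrArg Prod.snd (toLex.injective h)))
  obtain ⟨v₂, hv₂⟩ := F_sort (fun x => toLex (OrderDual.toDual (k x), OrderDual.toDual x))
    (fun x y h => OrderDual.toDual.injective (congrArg Prod.snd (toLex.injective h)))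
  have h1 : ∀ x y, (x, y) ∈ invSet m v₁ ↔ x < y ∧ (k y < k x ∨ k x = k y) := by
    intro x y
    simp only [invSet, Finset.mem_filter, Finset.mem_univ, true_and, hv₁,
      Prod.Lex.toLex_lt_toLex, OrderDual.toDual_lt_toDual]
    grind
  have h2 : ∀ x y, (x, y) ∈ invSet m v₂ ↔ x < y ∧ (k x < k y ∨ k x = k y) := by
    intro x y
    simp only [invSet, Finset.mem_filter, Finset.mem_univ, true_and, hv₂,
      Prod.Lex.toLex_lt_toLex, OrderDual.toDual_lt_toDual, OrderDual.toDual_inj]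
    grind
  refine ⟨v₁, v₂, ?_, ?_, ?_, ?_⟩
  · rintro ⟨x, y⟩ h
    simp only [invSet, Finset.mem_filter, Finset.mem_univ, true_and] at h
    rw [h1]
    refine ⟨h.1, ?_⟩
    rcases hlt y x (Or.inr h) with h' | h'
    · exact Or.inr ((hk _ _).2 h').symm
    · exact Or.inl h'
  · rintro ⟨x, y⟩ h
    simp only [invSet, Finset.mem_filter, Finset.mem_univ, true_and] at h
    rw [h2]
    refine ⟨h.1, ?_⟩
    rcases hlt x y (Or.inl h) with h' | h'
    · exact Or.inr ((hk _ _).2 h')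
    · exact Or.inl h'
  · ext ⟨x, y⟩
    rw [Finset.mem_inter, h1, h2, hmem]
    constructor
    · rintro ⟨⟨hxy, ha⟩, -, hb⟩
      have : k x = k y := by
        rcases ha with ha | ha
        · rcases hb with hb | hb
          · exact absurd ha hb.asymm
          · exact hb
        · exact ha
      rcases (hk _ _).1 this with h | h | h
      · exact absurd h hxy.ne
      · exact h
      · exact absurd h.1 hxy.asymm
    · intro h
      have := (hk x y).2 (Or.inr (Or.inl h))
      exact ⟨⟨h.1, Or.inr this⟩, h.1, Or.inr this⟩
  · ext ⟨x, y⟩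
    rw [Finset.mem_union, h1, h2]
    simp only [Finset.mem_filter, Finset.mem_univ, true_and]
    rcases lt_trichotomy (k x) (k y) with h | h | h <;> tauto
end

section
/- Let w₁, w₂ ∈ S_m and set B := N(w₁) ∩ N(w₂). Assume B is nonempty and pairwise orthogonal. Then there exist w₁'', u, x ∈ S_m with N(w₁) ⊆ N(w₁''), w₁'' = u·x, |N(w₁'')| = |N(u)| + |N(x)|, |N(x)| = |B|, and B = {(u(i), u(j)) : (i,j) ∈ N(x)}, with u(i) < u(j) for every (i,j) ∈ N(x). (Equivalently, w₁'' has a reduced expression in which the roots of B are exactly the last |B| roots β_{ℓ(w₁'')−|B|+1}, …, β_{ℓ(w₁'')}.) -/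
theorem exists_perm_of_key {m : ℕ} {α : Type*} [LinearOrder α] (key : Fin m → α)
    (hk : Function.Injective key) :
    ∃ w : Equiv.Perm (Fin m), ∀ a b, w⁻¹ a < w⁻¹ b ↔ key a < key b := by
  refine ⟨Tuple.sort key, fun a b => ?_⟩
  have hm : StrictMono (key ∘ Tuple.sort key) :=
    (Tuple.monotone_sort key).strictMono_of_injective (hk.comp (Equiv.injective _))
  rw [← hm.lt_iff_lt]
  simp

/-- Combinatorial heart: contracted relation is acyclic. -/
theorem contracted_acyclic {m : ℕ} (B : Fin m → Fin m → Prop) (r : Fin m → Fin m)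
    (P : Fin m → Fin m → Prop) (l : Fin m → Fin m)
    (hr : ∀ a b, r a = r b → a = b ∨ B a b ∨ B b a)
    (hPt : ∀ a b c, P a b → P b c → P a c)
    (hPl : ∀ a b, P a b → l b < l a)
    (hPlt : ∀ a b, P a b → b < a)
    (hBlt : ∀ a b, B a b → a < b)
    (hBl : ∀ a b, B a b → l b < l a)
    (hPB : ∀ a b, P a b → ¬ B b a)
    (hPBt : ∀ a i j, P a j → B i j → P a i) (x : Fin m) :
    ¬ Relation.TransGen (fun x y => ∃ a b, r a = x ∧ r b = y ∧ P a b) x x := by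
  have key : ∀ y, Relation.TransGen (fun x y => ∃ a b, r a = x ∧ r b = y ∧ P a b) x y →
      ∃ a b, r a = x ∧ r b = y ∧ (P a b ∨ ∃ i i' j', B i' j' ∧ P a i ∧ P j' b ∧ l i' ≤ l i) := by
    intro y h
    induction h with
    | single h =>
      obtain ⟨a, b, h1, h2, h3⟩ := h
      exact ⟨a, b, h1, h2, Or.inl h3⟩
    | tail _ h ih =>
      obtain ⟨a, b, ha, hb, hQ⟩ := ih
      obtain ⟨c, d, hc, hd, hP⟩ := h
      refine ⟨a, d, ha, hd, ?_⟩
      rcases hr b c (hb.trans hc.symm) with rfl | h | h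
      · rcases hQ with h | ⟨i, i', j', h1, h2, h3, h4⟩
        · exact Or.inl (hPt _ _ _ h hP)
        · exact Or.inr ⟨i, i', j', h1, h2, hPt _ _ _ h3 hP, h4⟩
      · rcases hQ with h' | ⟨i, i', j', h1, h2, h3, h4⟩
        · exact Or.inr ⟨b, b, c, h, h', hP, le_rfl⟩
        · refine Or.inr ⟨i, b, c, h, h2, hP, ?_⟩
          have := hPl _ _ h3
          have := hBl _ _ h1
          omega
      · rcases hQ with h' | ⟨i, i', j', h1, h2, h3, h4⟩
        · exact Or.inl (hPt _ _ _ (hPBt _ _ _ h' h) hP)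
        · exact Or.inr ⟨i, i', j', h1, h2, hPt _ _ _ (hPBt _ _ _ h3 h) hP, h4⟩
  intro h
  obtain ⟨a, b, ha, hb, hQ⟩ := key x h
  have hS := hr a b (ha.trans hb.symm)
  rcases hQ with h' | ⟨i, i', j', h1, h2, h3, h4⟩
  · have := hPlt _ _ h'
    rcases hS with rfl | h | h
    · exact lt_irrefl _ this
    · exact lt_asymm this (hBlt _ _ h)
    · exact hPB _ _ h' h
  · have e1 := hPl _ _ h3
    have e2 := hPl _ _ h2
    have e3 := hBl _ _ h1
    rcases hS with rfl | h | h
    · omega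
    · have := hPl _ _ (hPBt _ _ _ h3 h)
      omega
    · have := hBl _ _ h
      omega

theorem extension_with_block {m : ℕ} (w₁ w₂ : Equiv.Perm (Fin m))
    (B : Finset (Fin m × Fin m)) (hB : B = invSet m w₁ ∩ invSet m w₂)
    (hne : B.Nonempty) (horth : PairwiseOrth B) :
    ∃ w u x : Equiv.Perm (Fin m),
      invSet m w₁ ⊆ invSet m w ∧ w = u * x ∧
      (invSet m w).card = (invSet m u).card + (invSet m x).card ∧
      (invSet m x).card = B.card ∧
      B = (invSet m x).image (fun p => (u p.1, u p.2)) ∧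
      ∀ p ∈ invSet m x, u p.1 < u p.2 := by
  classical
  have hmem : ∀ (w : Equiv.Perm (Fin m)) a b, (a, b) ∈ invSet m w ↔ a < b ∧ w⁻¹ b < w⁻¹ a := by
    intro w a b
    simp [invSet]
  have hBm : ∀ a b, (a, b) ∈ B ↔ a < b ∧ w₁⁻¹ b < w₁⁻¹ a ∧ w₂⁻¹ b < w₂⁻¹ a := by
    intro a b
    rw [hB, Finset.mem_inter, hmem, hmem]
    tauto
  have hO : ∀ a b c d, (a, b) ∈ B → (c, d) ∈ B →
      (a = c ∧ b = d) ∨ (a ≠ c ∧ a ≠ d ∧ b ≠ c ∧ b ≠ d) := by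
    intro a b c d h1 h2
    by_cases h : (a, b) = (c, d)
    · left
      simpa using h
    · right
      exact horth _ h1 _ h2 h
  have hinj2 : ∀ a b, w₂⁻¹ a = w₂⁻¹ b → a = b := fun a b h => w₂⁻¹.injective h
  obtain ⟨r, hrs⟩ : ∃ r : Fin m → Fin m, ∀ a,
      (r a = a ∧ ∀ i, (i, a) ∉ B) ∨ (r a, a) ∈ B := by
    have : ∀ a, ∃ c, (c = a ∧ ∀ i, (i, a) ∉ B) ∨ (c, a) ∈ B := by
      intro a
      by_cases h : ∃ i, (i, a) ∈ B
      · exact ⟨h.choose, Or.inr h.choose_spec⟩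
      · exact ⟨a, Or.inl ⟨rfl, fun i hi => h ⟨i, hi⟩⟩⟩
    exact ⟨fun a => (this a).choose, fun a => (this a).choose_spec⟩
  have hr1 : ∀ a b, r a = r b → a = b ∨ (a, b) ∈ B ∨ (b, a) ∈ B := by
    intro a b h
    rcases hrs a with ⟨h1, h2⟩ | h1 <;> rcases hrs b with ⟨h3, h4⟩ | h3
    · left; rw [← h1, ← h3, h]
    · right; left; rw [← h, h1] at h3; exact h3
    · right; right; rw [h, h3] at h1; exact h1
    · left
      rw [h] at h1
      have := hO _ _ _ _ h1 h3
      tauto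
  have hr2 : ∀ a b, (a, b) ∈ B → r a = r b := by
    intro a b h
    have e2 : r b = a := by
      rcases hrs b with ⟨h3, h4⟩ | h3
      · exact absurd h (h4 a)
      · have := hO _ _ _ _ h h3
        tauto
    have e1 : r a = a := by
      rcases hrs a with ⟨h3, h4⟩ | h3
      · exact h3
      · have := hO _ _ _ _ h h3
        have := (hBm _ _).1 h
        have : a ≠ b := ne_of_lt this.1
        tauto
    rw [e1, e2]
  let P : Fin m → Fin m → Prop := fun a b => (b, a) ∈ invSet m w₁ ∧ (b, a) ∉ B
  have hP : ∀ a b, P a b ↔ b < a ∧ w₁⁻¹ a < w₁⁻¹ b ∧ w₂⁻¹ b < w₂⁻¹ a := by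
    intro a b
    simp only [P, hmem, hBm]
    have := hinj2 a b
    constructor
    · rintro ⟨⟨h1, h2⟩, h3⟩
      refine ⟨h1, h2, lt_of_le_of_ne (not_lt.1 fun h => h3 ⟨h1, h2, h⟩) fun h => ?_⟩
      exact absurd (hinj2 _ _ h) h1.ne
    · rintro ⟨h1, h2, h3⟩
      exact ⟨⟨h1, h2⟩, fun h => lt_asymm h3 h.2.2⟩
  let E : Fin m → Fin m → Prop := fun x y => ∃ a b, r a = x ∧ r b = y ∧ P a b
  have hac : ∀ x, ¬ Relation.TransGen E x x := by
    intro x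
    refine contracted_acyclic (fun a b => (a, b) ∈ B) r P (fun a => w₂⁻¹ a)
      hr1 ?_ ?_ ?_ ?_ ?_ ?_ ?_ x
    · intro a b c h1 h2
      rw [hP] at *
      exact ⟨h2.1.trans h1.1, h1.2.1.trans h2.2.1, h2.2.2.trans h1.2.2⟩
    · intro a b h
      exact ((hP _ _).1 h).2.2
    · intro a b h
      exact ((hP _ _).1 h).1
    · intro a b h
      exact ((hBm _ _).1 h).1
    · intro a b h
      exact ((hBm _ _).1 h).2.2
    · intro a b h
      exact h.2
    · intro a i j h1 h2
      have h3 := (hP _ _).1 h1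
      have h4 := (hBm _ _).1 h2
      refine ⟨(hmem _ _ _).2 ⟨h4.1.trans h3.1, h3.2.1.trans h4.2.1⟩, fun h => ?_⟩
      have := hO _ _ _ _ h h2
      have : a ≠ j := ne_of_gt h3.1
      tauto
  let f : Fin m → ℕ := fun x => (Finset.univ.filter (fun y => Relation.TransGen E y x)).card
  have hf : ∀ x y, E x y → f x < f y := by
    intro x y h
    apply Finset.card_lt_card
    rw [Finset.ssubset_iff_of_subset]
    · refine ⟨x, ?_, ?_⟩
      · simpa using Relation.TransGen.single h
      · simpa using hac x
    · intro z hz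
      simp only [Finset.mem_filter, Finset.mem_univ, true_and] at hz ⊢
      exact hz.tail h
  let k1 : Fin m → ℕ ×ₗ (Fin m ×ₗ Fin m) := fun a => toLex (f (r a), toLex (r a, Fin.rev a))
  let k2 : Fin m → ℕ ×ₗ (Fin m ×ₗ Fin m) := fun a => toLex (f (r a), toLex (r a, a))
  have hk1 : ∀ a b, k1 a < k1 b ↔ f (r a) < f (r b) ∨
      (f (r a) = f (r b) ∧ (r a < r b ∨ r a = r b ∧ b < a)) := by
    intro a b
    simp [k1, Prod.Lex.toLex_lt_toLex]
  have hk2 : ∀ a b, k2 a < k2 b ↔ f (r a) < f (r b) ∨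
      (f (r a) = f (r b) ∧ (r a < r b ∨ r a = r b ∧ a < b)) := by
    intro a b
    simp [k2, Prod.Lex.toLex_lt_toLex]
  obtain ⟨w, hw⟩ := exists_perm_of_key k1 (by
    intro a b h
    simp [k1] at h
    exact h.2.2)
  obtain ⟨u, hu⟩ := exists_perm_of_key k2 (by
    intro a b h
    simp [k2] at h
    exact h.2.2)
  have hblock : ∀ a b, a < b → (r a = r b ↔ (a, b) ∈ B) := by
    intro a b hab
    refine ⟨fun h => ?_, hr2 a b⟩
    rcases hr1 a b h with h | h | h
    · exact absurd h hab.ne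
    · exact h
    · exact absurd ((hBm _ _).1 h).1 (lt_asymm hab)
  have hdiff : ∀ a b, (w⁻¹ b < w⁻¹ a ∧ u⁻¹ a < u⁻¹ b) ↔ (a, b) ∈ B := by
    intro a b
    rw [hw, hu, hk1, hk2]
    constructor
    · intro h
      have h1 : r a = r b ∧ a < b := by
        rcases h with ⟨h1, h2⟩
        omega
      exact (hblock a b h1.2).1 h1.1
    · intro h
      have h1 := ((hBm _ _).1 h).1
      have h2 := hr2 _ _ h
      rw [h2]
      simp [h1]
  have hxm : ∀ i j, (i, j) ∈ invSet m (u⁻¹ * w) ↔ (u i, u j) ∈ B := by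
    intro i j
    rw [hmem, ← hdiff]
    simp [and_comm]
  have himg : B = (invSet m (u⁻¹ * w)).image (fun p => (u p.1, u p.2)) := by
    ext ⟨a, b⟩
    simp only [Finset.mem_image, Prod.exists]
    constructor
    · intro h
      exact ⟨u⁻¹ a, u⁻¹ b, (hxm _ _).2 (by simpa using h), by simp⟩
    · rintro ⟨i, j, h1, h2⟩
      rw [← h2]
      exact (hxm _ _).1 h1
  have hcard : (invSet m (u⁻¹ * w)).card = B.card := by
    conv_rhs => rw [himg]
    rw [Finset.card_image_of_injective]
    rintro ⟨a, b⟩ ⟨c, d⟩ h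
    simpa using h
  refine ⟨w, u, u⁻¹ * w, ?_, by simp, ?_, hcard, himg, ?_⟩
  · rintro ⟨a, b⟩ h
    have h' := (hmem _ _ _).1 h
    refine (hmem _ _ _).2 ⟨h'.1, ?_⟩
    by_cases hb : (a, b) ∈ B
    · exact ((hdiff _ _).2 hb).1
    · rw [hw, hk1]
      exact Or.inl (hf _ _ ⟨b, a, rfl, rfl, h, hb⟩)
  · rw [hcard, ← Finset.card_union_of_disjoint]
    · congr 1
      ext ⟨a, b⟩
      rw [Finset.mem_union, hmem, hmem, hw, hu, hk1, hk2]
      constructor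
      · rintro ⟨h1, h2⟩
        by_cases hr : r a = r b
        · exact Or.inr ((hblock a b h1).1 hr)
        · left
          omega
      · rintro (⟨h1, h2⟩ | h)
        · omega
        · have h1 := ((hBm _ _).1 h).1
          have h2 := hr2 _ _ h
          rw [h2]
          simp [h1]
    · rw [Finset.disjoint_left]
      rintro ⟨a, b⟩ h1 h2
      exact lt_asymm ((hmem _ _ _).1 h1).2 ((hdiff _ _).2 h2).2
  · rintro ⟨i, j⟩ h
    exact ((hBm _ _).1 ((hxm _ _).1 h)).1
end
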